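/- arXiv:1809.00441 — 3 statements merged into one kernel-verified Lean document; each statement's English description precedes it below -/
import Mathlib

section
/- Let T : [0,1] → [0,1] be an interval map such that, in a neighborhood of the origin, T is invertible and has the form T(x) = x(1 ± V(x)), where V : [0,∞) → (0,1) is continuous, increasing, regularly varying at 0 with index σ > 0, and satisfies liminf_{x→0} x^σ/V(x) > 0. Let ω_{α,β} be the modulus of continuity with ω_{α,β}(h) = h^α(−log h)^{−β} for 0 < h < h₀ and constant equal to h₀^α(−log h₀)^{−β} for h ≥ h₀, with h₀ small enough to make ω_{α,β} concave. Then, for α = σ and β = 0, or for 0 ≤ α < min{σ,1} and β ≥ 0 with α + β > 0, there exists a function f ∈ C^{ω_{α,β}}([0,1]) which does not admit a continuous sub-action. -/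
open MeasureTheory Set Filter Topology Real

noncomputable section

/-- A `T`-invariant Borel probability measure concentrated on `[0,1]`. -/
def InvariantProb (T : ℝ → ℝ) (μ : Measure ℝ) : Prop :=
  IsProbabilityMeasure μ ∧ μ (Set.Icc 0 1) = 1 ∧ μ.map T = μ

/-- The maximum ergodic average `m(f,T)` over invariant probability measures on `[0,1]`. -/
noncomputable def ergMax (T f : ℝ → ℝ) : ℝ :=
  sSup {r : ℝ | ∃ μ : Measure ℝ, InvariantProb T μ ∧ r = ∫ x, f x ∂μ}

/-- `u` is a sub-action for `f` with respect to `T`. -/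
def IsSubaction (T f u : ℝ → ℝ) : Prop :=
  ∀ x ∈ Set.Icc (0:ℝ) 1, f x + u x - u (T x) ≤ ergMax T f

/-- `f` belongs to `C^ω([0,1])`: a multiple of `ω` is a modulus of continuity for `f`. -/
def MemCmod (ω f : ℝ → ℝ) : Prop :=
  ∃ C > (0:ℝ), ∀ x ∈ Set.Icc (0:ℝ) 1, ∀ y ∈ Set.Icc (0:ℝ) 1, |f x - f y| ≤ C * ω |x - y|

/-- A concave modulus of continuity. -/
def ConcaveModulus (ω : ℝ → ℝ) : Prop :=
  ContinuousOn ω (Set.Ici 0) ∧ MonotoneOn ω (Set.Ici 0) ∧ ω 0 = 0 ∧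
    (∀ x, 0 ≤ x → 0 ≤ ω x) ∧ ConcaveOn ℝ (Set.Ici 0) ω

/-- `V` is regularly varying at `0` with index `σ`. -/
def RegVary0 (V : ℝ → ℝ) (σ : ℝ) : Prop :=
  ∀ t > (0:ℝ), Tendsto (fun x => V (t * x) / V x) (𝓝[>] 0) (𝓝 (t ^ σ))

/-- The modulus of continuity `ω_{α,β}`: `h^α (-log h)^{-β}` for `0 < h < h₀`, constant
for `h ≥ h₀`, and vanishing at `0`. -/
noncomputable def omegaAB (α β h₀ : ℝ) : ℝ → ℝ := fun h =>
  if h ≤ 0 then 0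
  else if h < h₀ then h ^ α * (-Real.log h) ^ (-β)
  else h₀ ^ α * (-Real.log h₀) ^ (-β)

/-- Triangular profile for the bounded transfer function. -/
def psiT (t : ℝ) : ℝ := max 0 (1 - |t - 3| / 2)

/-- A tent of centre `c` and half-width `w`. -/
def tentT (c w t : ℝ) : ℝ := max 0 (w - |t - c|)

lemma tentT_nonneg (c w t : ℝ) : 0 ≤ tentT c w t := le_max_left _ _

lemma tentT_le (c w t : ℝ) (hw : 0 ≤ w) : tentT c w t ≤ w :=
  max_le hw (by linarith [abs_nonneg (t - c)])

lemma tentT_lip (c w s t : ℝ) : |tentT c w s - tentT c w t| ≤ |s - t| := by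
  unfold tentT
  refine (abs_max_sub_max_le_max _ _ _ _).trans (max_le (by simp) ?_)
  have h := abs_abs_sub_abs_le_abs_sub (t - c) (s - c)
  have e1 : w - |s - c| - (w - |t - c|) = |t - c| - |s - c| := by ring
  have e2 : t - c - (s - c) = t - s := by ring
  rw [e1]
  rw [e2, abs_sub_comm t s] at h
  exact h

lemma tentT_zero (c w t : ℝ) (h : w ≤ |t - c|) : tentT c w t = 0 :=
  max_eq_left (by linarith)

lemma psiT_nonneg (t : ℝ) : 0 ≤ psiT t := le_max_left _ _

lemma psiT_le (t : ℝ) : psiT t ≤ 1 := max_le (by norm_num) (by linarith [abs_nonneg (t - 3)])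

lemma psiT_zero (t : ℝ) (h : t ≤ 1 ∨ 5 ≤ t) : psiT t = 0 := by
  apply max_eq_left
  rcases h with h | h
  · rw [abs_of_nonpos (by linarith)]; linarith
  · rw [abs_of_nonneg (by linarith)]; linarith

lemma psiT_left (t : ℝ) (h1 : 1 ≤ t) (h : t ≤ 3) : psiT t = (t - 1) / 2 := by
  unfold psiT
  rw [abs_of_nonpos (by linarith), max_eq_right (by linarith)]; ring

lemma psiT_right (t : ℝ) (h1 : 3 ≤ t) (h : t ≤ 5) : psiT t = (5 - t) / 2 := by
  unfold psiT
  rw [abs_of_nonneg (by linarith), max_eq_right (by linarith)]; ring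

lemma psiT_ge (t : ℝ) : (5 - t) / 2 ≤ psiT t ∨ (t - 1) / 2 ≤ psiT t := by
  unfold psiT
  rcases le_total t 3 with h | h
  · right; rw [abs_of_nonpos (by linarith)]; exact le_max_of_le_right (by linarith)
  · left; rw [abs_of_nonneg (by linarith)]; exact le_max_of_le_right (by linarith)

lemma psiT_lip (s t : ℝ) : |psiT s - psiT t| ≤ |s - t| / 2 := by
  unfold psiT
  refine (abs_max_sub_max_le_max _ _ _ _).trans (max_le (by simp only [sub_self, abs_zero]; positivity) ?_)
  have h := abs_abs_sub_abs_le_abs_sub (t - 3) (s - 3)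
  have e1 : 1 - |s - 3| / 2 - (1 - |t - 3| / 2) = (|t - 3| - |s - 3|) / 2 := by ring
  have e2 : t - 3 - (s - 3) = t - s := by ring
  rw [e1, abs_div, abs_of_pos (by norm_num : (0:ℝ) < 2)]
  rw [e2, abs_sub_comm t s] at h
  linarith

/-- Key profile inequality, expanding case. -/
lemma key_plus (v s M t : ℝ) (hv : 0 ≤ v) (hs0 : 0 ≤ s) (hs : s ≤ 1 / 10)
    (hM : 0 ≤ M) (h1 : 1 ≤ t → v ≤ s) (h2 : t ≤ 5 → s ≤ M * v) :
    v * (tentT (3/2) (1/2) t - 5 * M * tentT 4 2 t) ≤ psiT (t * (1 + s)) - psiT t := by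
  have hMv : 0 ≤ M * v := mul_nonneg hM hv
  have hn := tentT_nonneg 4 2 t
  have hMn : 0 ≤ M * v * tentT 4 2 t := mul_nonneg hMv hn
  rcases le_total t 1 with ht | ht
  · rw [psiT_zero t (Or.inl ht), tentT_zero (3/2) (1/2) t
      (by rw [abs_of_nonpos (by linarith)]; linarith)]
    nlinarith [psiT_nonneg (t * (1 + s))]
  rcases le_total t 2 with ht2 | ht2
  · rw [psiT_left t ht (by linarith), psiT_left (t * (1 + s)) (by nlinarith) (by nlinarith)]
    have := tentT_le (3/2) (1/2) t (by norm_num)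
    have hvs := h1 ht
    have : v * tentT (3/2) (1/2) t ≤ v * (1/2) := by gcongr
    nlinarith
  rw [tentT_zero (3/2) (1/2) t (by rw [abs_of_nonneg (by linarith)]; linarith)]
  rcases le_total t (5/2) with ht3 | ht3
  · rw [psiT_left t ht (by linarith), psiT_left (t * (1 + s)) (by nlinarith) (by nlinarith)]
    nlinarith
  rcases le_total t 5 with ht5 | ht5
  · have h3 : 1 / 2 ≤ tentT 4 2 t := by
      unfold tentT
      refine le_max_of_le_right ?_
      have : |t - 4| ≤ 3/2 := abs_le.2 ⟨by linarith, by linarith⟩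
      linarith
    have h4 := (abs_le.1 (psiT_lip (t * (1 + s)) t)).1
    have h5 : |t * (1 + s) - t| = t * s := by
      rw [show t * (1 + s) - t = t * s by ring, abs_of_nonneg (by positivity)]
    rw [h5] at h4
    have h6 := h2 ht5
    have h7 : M * v * (1/2) ≤ M * v * tentT 4 2 t := by gcongr
    nlinarith
  · rw [psiT_zero t (Or.inr ht5)]
    nlinarith [psiT_nonneg (t * (1 + s))]

/-- Key profile inequality, contracting case. -/
lemma key_minus (v s M t : ℝ) (hv : 0 ≤ v) (hs0 : 0 ≤ s) (hs : s ≤ 1 / 10)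
    (hM : 0 ≤ M) (h1 : 1 ≤ t → v ≤ s) (h2 : t ≤ 5 → s ≤ M * v) :
    v * (tentT (9/2) (1/2) t - 5 * M * tentT (9/4) (7/4) t) ≤ psiT (t * (1 - s)) - psiT t := by
  have hMv : 0 ≤ M * v := mul_nonneg hM hv
  have hn := tentT_nonneg (9/4) (7/4) t
  have hMn : 0 ≤ M * v * tentT (9/4) (7/4) t := mul_nonneg hMv hn
  rcases le_total 5 t with ht | ht
  · rw [psiT_zero t (Or.inr ht), tentT_zero (9/2) (1/2) t
      (by rw [abs_of_nonneg (by linarith)]; linarith)]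
    nlinarith [psiT_nonneg (t * (1 - s))]
  rcases le_total 4 t with ht2 | ht2
  · rw [psiT_right t (by linarith) ht, psiT_right (t * (1 - s)) (by nlinarith) (by nlinarith)]
    have := tentT_le (9/2) (1/2) t (by norm_num)
    have hvs := h1 (by linarith)
    have : v * tentT (9/2) (1/2) t ≤ v * (1/2) := by gcongr
    nlinarith
  rw [tentT_zero (9/2) (1/2) t (by rw [abs_of_nonpos (by linarith)]; linarith)]
  rcases le_total (7/2) t with ht3 | ht3
  · rw [psiT_right t (by linarith) ht, psiT_right (t * (1 - s)) (by nlinarith) (by nlinarith)]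
    nlinarith
  rcases le_total 1 t with ht5 | ht5
  · have h3 : 1 / 2 ≤ tentT (9/4) (7/4) t := by
      unfold tentT
      refine le_max_of_le_right ?_
      have : |t - 9/4| ≤ 5/4 := abs_le.2 ⟨by linarith, by linarith⟩
      linarith
    have h4 := (abs_le.1 (psiT_lip (t * (1 - s)) t)).1
    have h5 : |t * (1 - s) - t| = t * s := by
      rw [show t * (1 - s) - t = -(t * s) by ring, abs_neg, abs_of_nonneg (by positivity)]
    rw [h5] at h4
    have h6 := h2 ht
    have h7 : M * v * (1/2) ≤ M * v * tentT (9/4) (7/4) t := by gcongr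
    nlinarith
  · rw [psiT_zero t (Or.inl ht5)]
    nlinarith [psiT_nonneg (t * (1 - s))]

/-- Exit lemma: a discrete orbit making definite progress crosses the middle region. -/
lemma exit_lemma (T p w : ℝ → ℝ) (η : ℝ) (hη : 0 < η)
    (h : ∀ x, 0 ≤ p x → p x ≤ 1/2 → p x + η ≤ p (T x) ∧ p (T x) ≤ 1 ∧ w x ≤ w (T x))
    (x₀ : ℝ) (h0 : p x₀ = 0) : ∃ y, 1/2 ≤ p y ∧ p y ≤ 1 ∧ w x₀ ≤ w y := by
  by_contra hcon
  push Not at hcon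
  have key : ∀ n : ℕ, ∃ y, n * η ≤ p y ∧ p y ≤ 1/2 ∧ w x₀ ≤ w y := by
    intro n
    induction n with
    | zero => exact ⟨x₀, by simp [h0], by rw [h0]; norm_num, le_rfl⟩
    | succ n ih =>
      obtain ⟨y, hy1, hy2, hy3⟩ := ih
      have hnn : 0 ≤ (n:ℝ) * η := by positivity
      obtain ⟨k1, k2, k3⟩ := h y (hnn.trans hy1) hy2
      refine ⟨T y, by push_cast; linarith, ?_, hy3.trans k3⟩
      by_contra hlt
      push Not at hlt
      exact absurd (hcon (T y) hlt.le k2) (not_lt.2 (hy3.trans k3))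
  obtain ⟨n, hn⟩ := exists_nat_gt (1 / η)
  obtain ⟨y, hy1, hy2, -⟩ := key n
  rw [div_lt_iff₀ hη] at hn
  linarith

lemma ergMax_nonpos (T f g : ℝ → ℝ) (hg : Measurable g) (hg0 : ∀ x, 0 ≤ g x)
    (hg1 : ∀ x, g x ≤ 1) (h : ∀ x ∈ Icc (0:ℝ) 1, f x ≤ g (T x) - g x) : ergMax T f ≤ 0 := by
  apply Real.sSup_nonpos
  rintro r ⟨μ, ⟨hμ, hμ1, hμT⟩, rfl⟩
  by_cases hf : Integrable f μ
  swap
  · rw [integral_undef hf]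
  have hT : AEMeasurable T μ := by
    apply aemeasurable_of_map_neZero
    rw [hμT]; infer_instance
  have hgi : Integrable g μ :=
    Integrable.of_bound hg.aestronglyMeasurable 1
      (Eventually.of_forall fun x => by rw [Real.norm_eq_abs, abs_of_nonneg (hg0 x)]; exact hg1 x)
  have hgT : Integrable (fun x => g (T x)) μ :=
    Integrable.of_bound (hg.comp_aemeasurable hT).aestronglyMeasurable 1
      (Eventually.of_forall fun x => by rw [Real.norm_eq_abs, abs_of_nonneg (hg0 _)]; exact hg1 _)
  have hae : ∀ᵐ x ∂μ, x ∈ Icc (0:ℝ) 1 := by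
    exact (mem_ae_iff_prob_eq_one measurableSet_Icc).2 hμ1
  have h1 : ∫ x, f x ∂μ ≤ ∫ x, (g (T x) - g x) ∂μ := by
    apply integral_mono_ae hf (hgT.sub hgi)
    filter_upwards [hae] with x hx using h x hx
  have h2 : ∫ x, g (T x) ∂μ = ∫ x, g x ∂μ := by
    rw [← integral_map hT hg.aestronglyMeasurable, hμT]
  rw [integral_sub hgT hgi, h2, sub_self] at h1
  exact h1

/-- The single-bump modulus estimate. -/
lemma bump_mod (ω φ : ℝ → ℝ) (hω : ConcaveModulus ω) (L B C v a : ℝ)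
    (hL0 : 0 ≤ L) (hB0 : 0 ≤ B) (hC0 : 0 ≤ C)
    (hL : ∀ s t, |φ s - φ t| ≤ L * |s - t|) (hB : ∀ t, |φ t| ≤ B)
    (ha : 0 < a) (hv0 : 0 ≤ v) (hv : v ≤ C * ω a) (x y : ℝ) :
    |v * φ (x / a) - v * φ (y / a)| ≤ (C * (L + 2 * B)) * ω |x - y| := by
  obtain ⟨-, hmono, hz, hpos, hcc⟩ := hω
  have hωn := hpos _ (abs_nonneg (x - y))
  have hωa := hpos _ ha.le
  rw [← mul_sub, abs_mul, abs_of_nonneg hv0]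
  rcases le_total |x - y| a with hle | hle
  · have hr : 0 ≤ |x - y| / a := by positivity
    have hr1 : |x - y| / a ≤ 1 := by rw [div_le_one ha]; exact hle
    have hc := hcc.2 (x := a) (mem_Ici.2 ha.le) (y := 0) (mem_Ici.2 le_rfl) hr
      (sub_nonneg.2 hr1) (by ring)
    simp only [smul_eq_mul, hz, mul_zero, add_zero] at hc
    rw [div_mul_cancel₀ _ ha.ne'] at hc
    have h1 := hL (x / a) (y / a)
    rw [← sub_div, abs_div, abs_of_pos ha] at h1
    calc v * |φ (x / a) - φ (y / a)| ≤ (C * ω a) * (L * (|x - y| / a)) := by gcongr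
      _ = C * L * (|x - y| / a * ω a) := by ring
      _ ≤ C * L * ω |x - y| := by gcongr
      _ ≤ _ := by
        have : 0 ≤ C * (2 * B) * ω |x - y| := by positivity
        linarith
  · have hm := hmono (mem_Ici.2 ha.le) (mem_Ici.2 (ha.le.trans hle)) hle
    have h1 : |φ (x / a) - φ (y / a)| ≤ 2 * B := by
      have := abs_sub (φ (x / a)) (φ (y / a))
      linarith [hB (x / a), hB (y / a)]
    calc v * |φ (x / a) - φ (y / a)| ≤ (C * ω |x - y|) * (2 * B) := by
          gcongr
          exact hv.trans (by gcongr)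
      _ ≤ _ := by
        have : 0 ≤ C * L * ω |x - y| := by positivity
        linarith

/-- Geometric scales. -/
def scl (δ : ℝ) (k : ℕ) : ℝ := δ * (1 / 16) ^ k

lemma scl_pos (δ : ℝ) (hδ : 0 < δ) (k : ℕ) : 0 < scl δ k := by unfold scl; positivity

lemma scl_le (δ : ℝ) (hδ : 0 < δ) (k : ℕ) : scl δ k ≤ δ := by
  unfold scl
  have : ((1:ℝ) / 16) ^ k ≤ 1 := pow_le_one₀ (by norm_num) (by norm_num)
  nlinarith

lemma scl_lt (δ : ℝ) (hδ : 0 < δ) {j k : ℕ} (h : j < k) : 16 * scl δ k ≤ scl δ j := by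
  unfold scl
  have : ((1:ℝ) / 16) ^ k ≤ (1 / 16) ^ (j + 1) :=
    pow_le_pow_of_le_one (by norm_num) (by norm_num) h
  rw [pow_succ] at this
  nlinarith

lemma scl_sep (δ : ℝ) (hδ : 0 < δ) {j k : ℕ} (x : ℝ) (hj : x / scl δ j ∈ Icc (1/2:ℝ) 6)
    (hk : x / scl δ k ∈ Icc (1/2:ℝ) 6) : j = k := by
  have pj := scl_pos δ hδ j
  have pk := scl_pos δ hδ k
  obtain ⟨j1, j2⟩ := hj
  obtain ⟨k1, k2⟩ := hk
  rw [le_div_iff₀ pj] at j1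
  rw [le_div_iff₀ pk] at k1
  rw [div_le_iff₀ pj] at j2
  rw [div_le_iff₀ pk] at k2
  rcases lt_trichotomy j k with h | h | h
  · have := scl_lt δ hδ h; linarith
  · exact h
  · have := scl_lt δ hδ h; linarith

lemma scl_tendsto (δ : ℝ) : Tendsto (scl δ) atTop (𝓝 0) := by
  have := (tendsto_pow_atTop_nhds_zero_of_lt_one (r := (1:ℝ)/16) (by norm_num)
    (by norm_num)).const_mul δ
  rw [mul_zero] at this
  exact this

lemma core (T V ω φ : ℝ → ℝ) (hω : ConcaveModulus ω) (L B C δ c : ℝ)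
    (hL0 : 0 ≤ L) (hB0 : 0 ≤ B) (hC0 : 0 < C) (hδ : 0 < δ) (hδ1 : 6 * δ < 1) (hc : 0 < c)
    (hL : ∀ s t, |φ s - φ t| ≤ L * |s - t|) (hB : ∀ t, |φ t| ≤ B)
    (hsupp : ∀ t, t ∉ Icc (1/2:ℝ) 6 → φ t = 0)
    (hv0 : ∀ k, 0 ≤ V (scl δ k)) (hv : ∀ k, V (scl δ k) ≤ C * ω (scl δ k))
    (hkey : ∀ k x, x / scl δ k ∈ Icc (1/2:ℝ) 6 →
      V (scl δ k) * φ (x / scl δ k) ≤ psiT (T x / scl δ k) - psiT (x / scl δ k))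
    (hsum : ∀ k, ∀ u : ℝ → ℝ,
      (∀ x, x / scl δ k ∈ Icc (1/2:ℝ) 6 →
        V (scl δ k) * φ (x / scl δ k) + u x - u (T x) ≤ 0) →
      ∃ x ∈ Icc 0 (6 * scl δ k), ∃ y ∈ Icc 0 (6 * scl δ k), u x + c ≤ u y) :
    ∃ f : ℝ → ℝ, MemCmod ω f ∧
      ¬ ∃ u : ℝ → ℝ, ContinuousOn u (Icc 0 1) ∧ IsSubaction T f u := by
  set f : ℝ → ℝ := fun x => ∑' k, V (scl δ k) * φ (x / scl δ k) with hf
  set g : ℝ → ℝ := fun x => ⨆ k, psiT (x / scl δ k) with hg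
  have f_in : ∀ k x, x / scl δ k ∈ Icc (1/2:ℝ) 6 → f x = V (scl δ k) * φ (x / scl δ k) := by
    intro k x hx
    refine tsum_eq_single k fun j hj => ?_
    rw [hsupp, mul_zero]
    intro hx'
    exact hj (scl_sep δ hδ x hx' hx)
  have f_out : ∀ x, (∀ k, x / scl δ k ∉ Icc (1/2:ℝ) 6) → f x = 0 := by
    intro x hx
    have : ∀ k, V (scl δ k) * φ (x / scl δ k) = 0 := fun k => by rw [hsupp _ (hx k), mul_zero]
    simp [hf, this]
  have bdd : ∀ x, BddAbove (range fun k => psiT (x / scl δ k)) := by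
    intro x
    refine ⟨1, ?_⟩
    rintro _ ⟨k, rfl⟩
    exact psiT_le _
  have psi_out : ∀ t, t ∉ Icc (1/2:ℝ) 6 → psiT t = 0 := by
    intro t ht
    apply psiT_zero
    by_contra hcon
    push Not at hcon
    exact ht ⟨by linarith, by linarith⟩
  have g_ge : ∀ k x, psiT (x / scl δ k) ≤ g x := fun k x => le_ciSup (bdd x) k
  have g_nn : ∀ x, 0 ≤ g x := fun x => (psiT_nonneg _).trans (g_ge 0 x)
  have g_le : ∀ x, g x ≤ 1 := fun x => ciSup_le fun k => psiT_le _
  have g_in : ∀ k x, x / scl δ k ∈ Icc (1/2:ℝ) 6 → g x ≤ psiT (x / scl δ k) := by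
    intro k x hx
    refine ciSup_le fun j => ?_
    by_cases hj : j = k
    · rw [hj]
    · rw [psi_out (x / scl δ j) fun h => hj (scl_sep δ hδ x h hx)]
      exact psiT_nonneg _
  have g_out : ∀ x, (∀ k, x / scl δ k ∉ Icc (1/2:ℝ) 6) → g x ≤ 0 := by
    intro x hx
    exact ciSup_le fun j => (psi_out _ (hx j)).le
  have g_meas : Measurable g := by
    refine Measurable.iSup fun k => ?_
    have : Continuous psiT := by unfold psiT; fun_prop
    exact this.measurable.comp (measurable_id.div_const _)
  have hcob : ∀ x, f x ≤ g (T x) - g x := by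
    intro x
    by_cases hx : ∃ k, x / scl δ k ∈ Icc (1/2:ℝ) 6
    · obtain ⟨k, hk⟩ := hx
      rw [f_in k x hk]
      linarith [hkey k x hk, g_ge k (T x), g_in k x hk]
    · push Not at hx
      rw [f_out x hx]
      linarith [g_nn (T x), g_out x hx]
  have herg : ergMax T f ≤ 0 := ergMax_nonpos T f g g_meas g_nn g_le fun x _ => hcob x
  have hmod : ∀ k x y, |V (scl δ k) * φ (x / scl δ k) - V (scl δ k) * φ (y / scl δ k)| ≤
      (C * (L + 2 * B)) * ω |x - y| := fun k x y =>
    bump_mod ω φ hω L B C _ _ hL0 hB0 hC0.le hL hB (scl_pos δ hδ k) (hv0 k) (hv k) x y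
  refine ⟨f, ⟨2 * (C * (L + 2 * B)) + 1, by positivity, ?_⟩, ?_⟩
  · intro x _ y _
    have hωn := hω.2.2.2.1 _ (abs_nonneg (x - y))
    have hK : 0 ≤ (C * (L + 2 * B)) * ω |x - y| := by positivity
    suffices h : |f x - f y| ≤ 2 * ((C * (L + 2 * B)) * ω |x - y|) by nlinarith
    by_cases hx : ∃ k, x / scl δ k ∈ Icc (1/2:ℝ) 6
    · obtain ⟨k, hk⟩ := hx
      have hxk := hmod k x y
      by_cases hyk : y / scl δ k ∈ Icc (1/2:ℝ) 6
      · rw [f_in k x hk, f_in k y hyk]; linarith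
      rw [hsupp _ hyk, mul_zero, sub_zero] at hxk
      rw [f_in k x hk]
      by_cases hy : ∃ j, y / scl δ j ∈ Icc (1/2:ℝ) 6
      · obtain ⟨j, hj⟩ := hy
        have hyj := hmod j x y
        have hxj : x / scl δ j ∉ Icc (1/2:ℝ) 6 := by
          intro h
          have := scl_sep δ hδ x h hk
          rw [this] at hj
          exact hyk hj
        rw [hsupp _ hxj, mul_zero, zero_sub, abs_neg] at hyj
        rw [f_in j y hj]
        exact (abs_sub _ _).trans (by linarith)
      · push Not at hy
        rw [f_out y hy, sub_zero]; linarith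
    · push Not at hx
      rw [f_out x hx]
      by_cases hy : ∃ j, y / scl δ j ∈ Icc (1/2:ℝ) 6
      · obtain ⟨j, hj⟩ := hy
        have hyj := hmod j x y
        rw [hsupp _ (hx j), mul_zero, zero_sub, abs_neg] at hyj
        rw [f_in j y hj, zero_sub, abs_neg]
        linarith
      · push Not at hy
        rw [f_out y hy, sub_zero, abs_zero]; linarith
  · rintro ⟨u, hu, hsub⟩
    have h0 := hu 0 (by simp)
    rw [Metric.continuousWithinAt_iff] at h0
    obtain ⟨d, hd, hd'⟩ := h0 (c / 2) (by positivity)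
    obtain ⟨k, hk⟩ := ((scl_tendsto δ).eventually (gt_mem_nhds (show (0:ℝ) < d / 6 by positivity))).exists
    have hpk := scl_pos δ hδ k
    have hlk := scl_le δ hδ k
    have hI : ∀ x ∈ Icc 0 (6 * scl δ k), |u x - u 0| < c / 2 := by
      intro x hx
      have := hd' (x := x) ⟨hx.1, by linarith [hx.2]⟩
        (by rw [Real.dist_eq, sub_zero, abs_of_nonneg hx.1]; linarith [hx.2])
      rwa [Real.dist_eq] at this
    obtain ⟨x, hx, y, hy, hxy⟩ := hsum k u (by
      intro x hx
      rw [← f_in k x hx]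
      have h1 : x ≤ 6 * scl δ k := (div_le_iff₀ hpk).1 hx.2
      have h2 : 1 / 2 * scl δ k ≤ x := (le_div_iff₀ hpk).1 hx.1
      exact (hsub x ⟨by linarith, by linarith⟩).trans herg)
    have h1 := abs_lt.1 (hI x hx)
    have h2 := abs_lt.1 (hI y hy)
    linarith [h1.1, h2.2]

lemma profile_lip (c w c' w' K s t : ℝ) (hK : 0 ≤ K) :
    |(tentT c w s - K * tentT c' w' s) - (tentT c w t - K * tentT c' w' t)|
      ≤ (1 + K) * |s - t| := by
  have h1 := tentT_lip c w s t
  have h2 := tentT_lip c' w' s t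
  have e : (tentT c w s - K * tentT c' w' s) - (tentT c w t - K * tentT c' w' t)
    = (tentT c w s - tentT c w t) - K * (tentT c' w' s - tentT c' w' t) := by ring
  rw [e]
  refine (abs_sub _ _).trans ?_
  rw [abs_mul, abs_of_nonneg hK]
  nlinarith

lemma profile_bdd (c w c' w' K t : ℝ) (hK : 0 ≤ K) (hw : 0 ≤ w) (hw' : 0 ≤ w') :
    |tentT c w t - K * tentT c' w' t| ≤ w + K * w' := by
  have h1 := tentT_nonneg c w t
  have h2 := tentT_nonneg c' w' t
  have h3 := tentT_le c w t hw
  have h4 := tentT_le c' w' t hw'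
  refine (abs_sub _ _).trans ?_
  rw [abs_mul, abs_of_nonneg hK, abs_of_nonneg h1, abs_of_nonneg h2]
  nlinarith

lemma sum_plus (T V : ℝ → ℝ) (a M : ℝ) (ha : 0 < a) (hM : 0 < M) (hva : 0 < V a)
    (hform : ∀ x, x / a ∈ Icc (1/2:ℝ) 6 → T x = x * (1 + V x))
    (hlo : ∀ x, a ≤ x → V a ≤ V x) (hhi : ∀ x, a ≤ x → x ≤ 5 * a → V x ≤ M * V a)
    (hsmall : ∀ x, a ≤ x → x ≤ 5 * a → V x ≤ 1/10) (u : ℝ → ℝ)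
    (hu : ∀ x, x / a ∈ Icc (1/2:ℝ) 6 →
      V a * (tentT (3/2) (1/2) (x / a) - 5 * M * tentT 4 2 (x / a)) + u x - u (T x) ≤ 0) :
    ∃ x ∈ Icc 0 (6 * a), ∃ y ∈ Icc 0 (6 * a), u x + 1 / (40 * M) ≤ u y := by
  obtain ⟨y, hy1, hy2, hy3⟩ := exit_lemma T (fun x => x / a - 5/4)
    (fun x => u x - x / a / (20 * M)) (V a) hva (by
      intro x hx0 hx1
      obtain ⟨t, ht⟩ : ∃ t, t = x / a := ⟨_, rfl⟩
      have hxt : x = t * a := by rw [ht]; field_simp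
      simp only [← ht] at hx0 hx1 ⊢
      have hmem : x / a ∈ Icc (1/2:ℝ) 6 := by rw [← ht]; exact ⟨by linarith, by linarith⟩
      have hx5 : x ≤ 5 * a := by rw [hxt]; nlinarith
      have hxa : a ≤ x := by rw [hxt]; nlinarith
      have h1 := hlo x hxa
      have h2 := hhi x hxa hx5
      have h3 := hsmall x hxa hx5
      have hu' := hu x hmem
      rw [← ht, tentT_zero 4 2 t (by rw [abs_of_nonpos (by linarith)]; linarith)] at hu'
      have h4 : 1 / 4 ≤ tentT (3/2) (1/2) t := by
        refine le_max_of_le_right ?_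
        have : |t - 3/2| ≤ 1/4 := abs_le.2 ⟨by linarith, by linarith⟩
        linarith
      have hTx : T x / a = t + t * V x := by rw [hform x hmem, hxt]; field_simp
      simp only [hTx]
      refine ⟨by nlinarith, by nlinarith, ?_⟩
      have h5 : (t + t * V x) / (20 * M) = t / (20 * M) + t * V x / (20 * M) := by ring
      rw [h5]
      have h6 : t * V x / (20 * M) ≤ V a / 4 := by
        rw [div_le_iff₀ (by positivity)]
        nlinarith
      nlinarith) (5/4 * a) (by field_simp; norm_num)
  obtain ⟨t, ht⟩ : ∃ t, t = y / a := ⟨_, rfl⟩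
  have hyt : y = t * a := by rw [ht]; field_simp
  simp only [← ht] at hy1 hy2 hy3
  refine ⟨5/4 * a, ⟨by positivity, by linarith⟩, y, ⟨?_, ?_⟩, ?_⟩
  · rw [hyt]; nlinarith
  · rw [hyt]; nlinarith
  · have e1 : 5/4 * a / a = 5/4 := by field_simp
    rw [e1] at hy3
    have e2 : 1 / (40 * M) = (1/2) / (20 * M) := by field_simp; norm_num
    have e3 : (1/2) / (20 * M) ≤ (t - 5/4) / (20 * M) := by gcongr
    have e4 : (t - 5/4) / (20 * M) = t / (20 * M) - 5/4 / (20 * M) := by ring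
    linarith

lemma sum_minus (T V : ℝ → ℝ) (a M : ℝ) (ha : 0 < a) (hM : 0 < M) (hva : 0 < V a)
    (hform : ∀ x, x / a ∈ Icc (1/2:ℝ) 6 → T x = x * (1 - V x))
    (hlo : ∀ x, a ≤ x → V a ≤ V x) (hhi : ∀ x, a ≤ x → x ≤ 5 * a → V x ≤ M * V a)
    (hsmall : ∀ x, a ≤ x → x ≤ 5 * a → V x ≤ 1/10) (u : ℝ → ℝ)
    (hu : ∀ x, x / a ∈ Icc (1/2:ℝ) 6 →
      V a * (tentT (9/2) (1/2) (x / a) - 5 * M * tentT (9/4) (7/4) (x / a)) + u x - u (T x) ≤ 0) :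
    ∃ x ∈ Icc 0 (6 * a), ∃ y ∈ Icc 0 (6 * a), u x + 1 / (40 * M) ≤ u y := by
  obtain ⟨y, hy1, hy2, hy3⟩ := exit_lemma T (fun x => 19/4 - x / a)
    (fun x => u x + x / a / (20 * M)) (V a) hva (by
      intro x hx0 hx1
      obtain ⟨t, ht⟩ : ∃ t, t = x / a := ⟨_, rfl⟩
      have hxt : x = t * a := by rw [ht]; field_simp
      simp only [← ht] at hx0 hx1 ⊢
      have hmem : x / a ∈ Icc (1/2:ℝ) 6 := by rw [← ht]; exact ⟨by linarith, by linarith⟩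
      have hx5 : x ≤ 5 * a := by rw [hxt]; nlinarith
      have hxa : a ≤ x := by rw [hxt]; nlinarith
      have h1 := hlo x hxa
      have h2 := hhi x hxa hx5
      have h3 := hsmall x hxa hx5
      have hu' := hu x hmem
      rw [← ht, tentT_zero (9/4) (7/4) t (by rw [abs_of_nonneg (by linarith)]; linarith)] at hu'
      have h4 : 1 / 4 ≤ tentT (9/2) (1/2) t := by
        refine le_max_of_le_right ?_
        have : |t - 9/2| ≤ 1/4 := abs_le.2 ⟨by linarith, by linarith⟩
        linarith
      have hTx : T x / a = t - t * V x := by rw [hform x hmem, hxt]; field_simp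
      simp only [hTx]
      refine ⟨by nlinarith, by nlinarith, ?_⟩
      have h5 : (t - t * V x) / (20 * M) = t / (20 * M) - t * V x / (20 * M) := by ring
      rw [h5]
      have h6 : t * V x / (20 * M) ≤ V a / 4 := by
        rw [div_le_iff₀ (by positivity)]
        nlinarith
      nlinarith) (19/4 * a) (by field_simp; norm_num)
  obtain ⟨t, ht⟩ : ∃ t, t = y / a := ⟨_, rfl⟩
  have hyt : y = t * a := by rw [ht]; field_simp
  simp only [← ht] at hy1 hy2 hy3
  refine ⟨19/4 * a, ⟨by positivity, by linarith⟩, y, ⟨?_, ?_⟩, ?_⟩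
  · rw [hyt]; nlinarith
  · rw [hyt]; nlinarith
  · have e1 : 19/4 * a / a = 19/4 := by field_simp
    rw [e1] at hy3
    have e2 : 1 / (40 * M) = (1/2) / (20 * M) := by field_simp; norm_num
    have e3 : (1/2) / (20 * M) ≤ (19/4 - t) / (20 * M) := by gcongr
    have e4 : (19/4 - t) / (20 * M) = 19/4 / (20 * M) - t / (20 * M) := by ring
    linarith

lemma rpow_le_omegaAB (σ α β h₀ : ℝ) (hh₀ : h₀ ∈ Ioo (0:ℝ) 1)
    (hαβ : (α = σ ∧ β = 0) ∨ (0 ≤ α ∧ α < min σ 1 ∧ 0 ≤ β ∧ 0 < α + β)) :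
    ∀ᶠ x in 𝓝[>] (0:ℝ), x ^ σ ≤ omegaAB α β h₀ x := by
  have hlt : ∀ᶠ x in 𝓝[>] (0:ℝ), x < h₀ :=
    mem_nhdsWithin_of_mem_nhds (gt_mem_nhds hh₀.1)
  rcases hαβ with ⟨rfl, rfl⟩ | ⟨-, h2, -, -⟩
  · filter_upwards [hlt, self_mem_nhdsWithin] with x hx hx0
    have hx0 : 0 < x := hx0
    simp [omegaAB, not_le.2 hx0, hx]
  · have hs : α - σ < 0 := by linarith [h2.trans_le (min_le_left _ _)]
    have := (isLittleO_abs_log_rpow_rpow_nhdsGT_zero (s := α - σ) β hs).bound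
      (c := 1) one_pos
    filter_upwards [hlt, self_mem_nhdsWithin, this] with x hx hx0 hb
    have hx0 : 0 < x := hx0
    have hlog : Real.log x < 0 := Real.log_neg hx0 (hx.trans hh₀.2)
    have hl : 0 < -Real.log x := by linarith
    simp only [omegaAB, not_le.2 hx0, hx, if_true, if_false]
    rw [abs_of_neg hlog, one_mul, Real.norm_of_nonneg (by positivity),
      Real.norm_of_nonneg (by positivity)] at hb
    rw [Real.rpow_neg hl.le, ← div_eq_mul_inv, le_div_iff₀ (by positivity)]
    calc x ^ σ * (-Real.log x) ^ β ≤ x ^ σ * x ^ (α - σ) := by gcongr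
      _ = x ^ α := by rw [← Real.rpow_add hx0]; congr 1; ring

theorem no_continuous_subaction_omegaAB
    (T V : ℝ → ℝ) (σ : ℝ) (hσ : 0 < σ)
    (hT : MapsTo T (Icc 0 1) (Icc 0 1))
    (hVcont : ContinuousOn V (Ici 0)) (hVmono : StrictMonoOn V (Ici 0))
    (hVrange : ∀ x > (0:ℝ), V x ∈ Ioo (0:ℝ) 1)
    (hVreg : RegVary0 V σ)
    (hloc : ∃ ε > (0:ℝ), InjOn T (Ico 0 ε) ∧
      ((∀ x ∈ Ico (0:ℝ) ε, T x = x * (1 + V x)) ∨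
       (∀ x ∈ Ico (0:ℝ) ε, T x = x * (1 - V x))))
    (hliminf : 0 < Filter.liminf (fun x => x ^ σ / V x) (𝓝[>] 0))
    (α β h₀ : ℝ) (hh₀ : h₀ ∈ Ioo (0:ℝ) 1)
    (hconc : ConcaveModulus (omegaAB α β h₀))
    (hαβ : (α = σ ∧ β = 0) ∨ (0 ≤ α ∧ α < min σ 1 ∧ 0 ≤ β ∧ 0 < α + β)) :
    ∃ f : ℝ → ℝ, MemCmod (omegaAB α β h₀) f ∧
      ¬ ∃ u : ℝ → ℝ, ContinuousOn u (Icc 0 1) ∧ IsSubaction T f u := by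
  obtain ⟨ε, hε, -, hform⟩ := hloc
  -- `V ≤ C x^σ` near the origin
  obtain ⟨C, hC, hVle⟩ : ∃ C > (0:ℝ), ∀ᶠ x in 𝓝[>] (0:ℝ), V x ≤ C * x ^ σ := by
    set l := Filter.liminf (fun x => x ^ σ / V x) (𝓝[>] 0) with hl
    have hb : IsBoundedUnder (· ≥ ·) (𝓝[>] (0:ℝ)) (fun x => x ^ σ / V x) := by
      refine ⟨0, ?_⟩
      rw [eventually_map]
      filter_upwards [self_mem_nhdsWithin] with x hx
      have hx : 0 < x := hx
      have := (hVrange x hx).1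
      show 0 ≤ x ^ σ / V x
      positivity
    have h := eventually_lt_of_lt_liminf (show l / 2 < l by linarith) hb
    refine ⟨2 / l, by positivity, ?_⟩
    filter_upwards [h, self_mem_nhdsWithin] with x hx hx0
    have hV := (hVrange x hx0).1
    rw [lt_div_iff₀ hV] at hx
    rw [div_mul_eq_mul_div, le_div_iff₀ hliminf]
    linarith
  have hVsmall : ∀ᶠ x in 𝓝[>] (0:ℝ), V x ≤ 1 / 10 := by
    have h1 : Tendsto (fun x : ℝ => C * x ^ σ) (𝓝[>] 0) (𝓝 0) := by
      have : Tendsto (fun x : ℝ => C * x ^ σ) (𝓝 0) (𝓝 (C * 0 ^ σ)) :=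
        ((Real.continuous_rpow_const hσ.le).const_mul C).tendsto 0
      rw [Real.zero_rpow hσ.ne', mul_zero] at this
      exact this.mono_left nhdsWithin_le_nhds
    filter_upwards [hVle, h1.eventually (gt_mem_nhds (show (0:ℝ) < 1/10 by norm_num))] with x h h'
    linarith
  have hVom : ∀ᶠ x in 𝓝[>] (0:ℝ), V x ≤ C * omegaAB α β h₀ x := by
    filter_upwards [hVle, rpow_le_omegaAB σ α β h₀ hh₀ hαβ] with x h h'
    exact h.trans (by gcongr)
  set M : ℝ := 5 ^ σ + 1 with hMdef
  have hM : 0 < M := by positivity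
  have hVM : ∀ᶠ x in 𝓝[>] (0:ℝ), V (5 * x) ≤ M * V x := by
    have h := (hVreg 5 (by norm_num)).eventually
      (gt_mem_nhds (show (5:ℝ) ^ σ < M by linarith))
    filter_upwards [h, self_mem_nhdsWithin] with x hx hx0
    rw [div_lt_iff₀ (hVrange x hx0).1] at hx
    exact hx.le
  obtain ⟨r, hr, hr'⟩ := mem_nhdsGT_iff_exists_Ioo_subset.1
    (inter_mem hVsmall (inter_mem hVom hVM))
  have hr : 0 < r := hr
  obtain ⟨δ, hδ, hδr⟩ : ∃ δ > (0:ℝ), 7 * δ < min r (min ε 1) := by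
    have : 0 < min r (min ε 1) := by positivity
    exact ⟨min r (min ε 1) / 8, by positivity, by linarith⟩
  have hδ1 : 7 * δ < r := hδr.trans_le (min_le_left _ _)
  have hδ2 : 7 * δ < ε := hδr.trans_le ((min_le_right _ _).trans (min_le_left _ _))
  have hδ3 : 7 * δ < 1 := hδr.trans_le ((min_le_right _ _).trans (min_le_right _ _))
  have hpos := scl_pos δ hδ
  have hle := scl_le δ hδ
  have hin : ∀ k x, x / scl δ k ∈ Icc (1/2:ℝ) 6 → 0 < x ∧ x ≤ 6 * δ := by
    intro k x hx
    have h1 : x ≤ 6 * scl δ k := (div_le_iff₀ (hpos k)).1 hx.2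
    have h2 : 1 / 2 * scl δ k ≤ x := (le_div_iff₀ (hpos k)).1 hx.1
    exact ⟨by linarith [hpos k], by linarith [hle k]⟩
  have hsm : ∀ x, 0 < x → x ≤ 6 * δ → V x ≤ 1 / 10 := fun x h1 h2 =>
    (hr' ⟨h1, by linarith⟩).1
  have hom : ∀ k, V (scl δ k) ≤ C * omegaAB α β h₀ (scl δ k) := fun k =>
    (hr' ⟨hpos k, by linarith [hle k]⟩).2.1
  have hMk : ∀ k, V (5 * scl δ k) ≤ M * V (scl δ k) := fun k =>
    (hr' ⟨hpos k, by linarith [hle k]⟩).2.2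
  have hv0 : ∀ k, 0 < V (scl δ k) := fun k => (hVrange _ (hpos k)).1
  have hlo : ∀ k x, scl δ k ≤ x → V (scl δ k) ≤ V x := fun k x hx =>
    hVmono.monotoneOn (mem_Ici.2 (hpos k).le) (mem_Ici.2 ((hpos k).le.trans hx)) hx
  have hhi : ∀ k x, 0 < x → x ≤ 5 * scl δ k → V x ≤ M * V (scl δ k) := fun k x h0 hx =>
    (hVmono.monotoneOn (mem_Ici.2 h0.le) (mem_Ici.2 (h0.le.trans hx)) hx).trans (hMk k)
  rcases hform with hform | hform
  · have hf : ∀ k x, x / scl δ k ∈ Icc (1/2:ℝ) 6 → T x = x * (1 + V x) := fun k x hx =>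
      hform x ⟨(hin k x hx).1.le, by linarith [(hin k x hx).2]⟩
    refine core T V (omegaAB α β h₀) (fun t => tentT (3/2) (1/2) t - (5 * M) * tentT 4 2 t) hconc
      (1 + 5 * M) (1/2 + 5 * M * 2) C δ (1 / (40 * M)) (by positivity) (by positivity) hC hδ
      (by linarith) (by positivity)
      (fun s t => profile_lip _ _ _ _ _ s t (by positivity))
      (fun t => profile_bdd _ _ _ _ _ t (by positivity) (by norm_num) (by norm_num))
      ?_ (fun k => (hv0 k).le) hom ?_ ?_
    · intro t ht
      have h : 1 ≤ |t - 3/2| * 2 ∧ 2 ≤ |t - 4| := by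
        rw [mem_Icc, not_and_or, not_le, not_le] at ht
        rcases ht with h | h
        · rw [abs_of_nonpos (by linarith), abs_of_nonpos (by linarith)]
          constructor <;> linarith
        · rw [abs_of_nonneg (by linarith), abs_of_nonneg (by linarith)]
          constructor <;> linarith
      show tentT (3/2) (1/2) t - (5 * M) * tentT 4 2 t = 0
      rw [tentT_zero _ _ _ (by linarith [h.1]), tentT_zero _ _ _ h.2]; ring
    · intro k x hx
      have hx0 := hin k x hx
      have e : T x / scl δ k = x / scl δ k * (1 + V x) := by rw [hf k x hx]; ring
      rw [e]
      exact key_plus _ _ M _ (hv0 k).le (hVrange x hx0.1).1.le (hsm x hx0.1 hx0.2) hM.le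
        (fun h => hlo k x (by rwa [one_le_div (hpos k)] at h))
        (fun h => hhi k x hx0.1 ((div_le_iff₀ (hpos k)).1 h))
    · intro k u hu
      exact sum_plus T V _ M (hpos k) hM (hv0 k) (hf k) (hlo k)
        (fun x h h' => hhi k x ((hpos k).trans_le h) h')
        (fun x h h' => hsm x ((hpos k).trans_le h) (by linarith [hle k])) u hu
  · have hf : ∀ k x, x / scl δ k ∈ Icc (1/2:ℝ) 6 → T x = x * (1 - V x) := fun k x hx =>
      hform x ⟨(hin k x hx).1.le, by linarith [(hin k x hx).2]⟩
    refine core T V (omegaAB α β h₀)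
      (fun t => tentT (9/2) (1/2) t - (5 * M) * tentT (9/4) (7/4) t) hconc
      (1 + 5 * M) (1/2 + 5 * M * (7/4)) C δ (1 / (40 * M)) (by positivity) (by positivity) hC hδ
      (by linarith) (by positivity)
      (fun s t => profile_lip _ _ _ _ _ s t (by positivity))
      (fun t => profile_bdd _ _ _ _ _ t (by positivity) (by norm_num) (by norm_num))
      ?_ (fun k => (hv0 k).le) hom ?_ ?_
    · intro t ht
      have h : 1 ≤ |t - 9/2| * 2 ∧ 7/4 ≤ |t - 9/4| := by
        rw [mem_Icc, not_and_or, not_le, not_le] at ht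
        rcases ht with h | h
        · rw [abs_of_nonpos (by linarith), abs_of_nonpos (by linarith)]
          constructor <;> linarith
        · rw [abs_of_nonneg (by linarith), abs_of_nonneg (by linarith)]
          constructor <;> linarith
      show tentT (9/2) (1/2) t - (5 * M) * tentT (9/4) (7/4) t = 0
      rw [tentT_zero _ _ _ (by linarith [h.1]), tentT_zero _ _ _ h.2]; ring
    · intro k x hx
      have hx0 := hin k x hx
      have e : T x / scl δ k = x / scl δ k * (1 - V x) := by rw [hf k x hx]; ring
      rw [e]
      exact key_minus _ _ M _ (hv0 k).le (hVrange x hx0.1).1.le (hsm x hx0.1 hx0.2) hM.le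
        (fun h => hlo k x (by rwa [one_le_div (hpos k)] at h))
        (fun h => hhi k x hx0.1 ((div_le_iff₀ (hpos k)).1 h))
    · intro k u hu
      exact sum_minus T V _ M (hpos k) hM (hv0 k) (hf k) (hlo k)
        (fun x h h' => hhi k x ((hpos k).trans_le h) h')
        (fun x h h' => hsm x ((hpos k).trans_le h) (by linarith [hle k])) u hu

end
end

section
/- For ρ ∈ (0,1], let F_ρ : [0,1] → [0,1] satisfy F_ρ(x) = x/(1 − x^ρ)^{1/ρ} for x close to 0 (a generalized Farey map, with Farey map at ρ = 1), and let G_ρ be its first inverse branch, G_ρ(x) = x/(1 + x^ρ)^{1/ρ}. Let ω_{α,β} be the concave modulus with ω_{α,β}(h) = h^α(−log h)^{−β} for small h > 0, where either α ∈ [0,ρ) and β ≥ 0 with α + β > 0, or α = ρ and β = 0. Then there exist functions f, g ∈ C^{ω_{α,β}}([0,1]) which do not admit continuous sub-actions with respect to F_ρ and G_ρ, respectively. -/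
open MeasureTheory Set Filter Topology Real

noncomputable section

/-- The coboundary in the coordinate `y = x ^ ρ`, in which the dynamics is `y ↦ y / (1 + σ y)`. -/
def phiAux (σ y : ℝ) : ℝ := Real.sin (Real.log y - Real.log (1 + σ * y)) - Real.sin (Real.log y)

lemma phiAux_zero (σ : ℝ) : phiAux σ 0 = 0 := by simp [phiAux]

lemma phiAux_abs_le (σ y : ℝ) : |phiAux σ y| ≤ 2 := by
  unfold phiAux
  have h1 := Real.abs_sin_le_one (Real.log y - Real.log (1 + σ * y))
  have h2 := Real.abs_sin_le_one (Real.log y)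
  rw [abs_le] at *
  constructor <;> linarith [h1.1, h1.2, h2.1, h2.2]

lemma phiAux_lip (σ b : ℝ) (hσ : |σ| ≤ 1)
    (hb : ∀ y ∈ Ioo 0 b, 1 / 2 ≤ 1 + σ * y ∧ |Real.log (1 + σ * y)| ≤ 2 * y)
    (y z : ℝ) (hy : y ∈ Ico 0 b) (hz : z ∈ Ico 0 b) :
    |phiAux σ y - phiAux σ z| ≤ 4 * |y - z| := by
  have key : ∀ y ∈ Ioo 0 b, ∀ z ∈ Ioo 0 b, |phiAux σ y - phiAux σ z| ≤ 4 * |y - z| := by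
    intro y hy z hz
    have := Convex.norm_image_sub_le_of_norm_hasDerivWithin_le (f := phiAux σ)
      (f' := fun y => Real.cos (Real.log y - Real.log (1 + σ * y)) * (y⁻¹ - σ / (1 + σ * y))
        - Real.cos (Real.log y) * y⁻¹) (s := Ioo 0 b) (C := 4) ?_ ?_ (convex_Ioo 0 b) hz hy
    · simpa [Real.norm_eq_abs] using this
    · intro x hx
      apply HasDerivAt.hasDerivWithinAt
      obtain ⟨h1, h2⟩ := hb x hx
      have hx0 : x ≠ 0 := hx.1.ne'
      have hx1 : 1 + σ * x ≠ 0 := by linarith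
      have d1 := Real.hasDerivAt_log hx0
      have d2 : HasDerivAt (fun y => Real.log (1 + σ * y)) (σ / (1 + σ * x)) x := by
        have : HasDerivAt (fun y => 1 + σ * y) σ x := by
          simpa using ((hasDerivAt_id x).const_mul σ).const_add 1
        exact this.log hx1
      exact ((d1.sub d2).sin).sub d1.sin
    · intro x hx
      obtain ⟨h1, h2⟩ := hb x hx
      have hx0 : 0 < x := hx.1
      set A := Real.log x
      set L := Real.log (1 + σ * x)
      have e1 : |(Real.cos (A - L) - Real.cos A) * x⁻¹| ≤ 2 := by
        rw [abs_mul, abs_of_pos (inv_pos.2 hx0), ← div_eq_mul_inv, div_le_iff₀ hx0]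
        have := Real.abs_cos_sub_cos_le (A - L) A
        have h3 : |A - L - A| = |L| := by rw [← abs_neg]; congr 1; ring
        linarith
      have e2 : |Real.cos (A - L) * (σ / (1 + σ * x))| ≤ 2 := by
        rw [abs_mul, abs_div, abs_of_pos (a := 1 + σ * x) (by linarith)]
        have h4 := Real.abs_cos_le_one (A - L)
        have h5 : |σ| / (1 + σ * x) ≤ 2 := by
          rw [div_le_iff₀ (by linarith)]; linarith
        calc _ ≤ 1 * (|σ| / (1 + σ * x)) := by
              apply mul_le_mul_of_nonneg_right h4
              have : 0 ≤ |σ| := abs_nonneg σ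
              apply div_nonneg this; linarith
          _ ≤ 2 := by linarith
      rw [Real.norm_eq_abs]
      have : Real.cos (A - L) * (x⁻¹ - σ / (1 + σ * x)) - Real.cos A * x⁻¹
        = (Real.cos (A - L) - Real.cos A) * x⁻¹ - Real.cos (A - L) * (σ / (1 + σ * x)) := by ring
      rw [this, abs_le]
      rw [abs_le] at e1 e2
      constructor <;> linarith [e1.1, e1.2, e2.1, e2.2]
  have key0 : ∀ y ∈ Ioo 0 b, |phiAux σ y| ≤ 4 * y := by
    intro y hy
    have := Real.abs_sin_sub_sin_le (Real.log y - Real.log (1 + σ * y)) (Real.log y)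
    have h3 : |Real.log y - Real.log (1 + σ * y) - Real.log y| = |Real.log (1 + σ * y)| := by
      rw [← abs_neg]; congr 1; ring
    have := (hb y hy).2
    have := hy.1
    unfold phiAux
    linarith
  rcases hy.1.eq_or_lt with h | h
  · subst h
    rcases hz.1.eq_or_lt with h' | h'
    · subst h'; simp
    · have := key0 z ⟨h', hz.2⟩
      simpa [phiAux_zero, abs_of_pos h'] using this
  · rcases hz.1.eq_or_lt with h' | h'
    · subst h'
      have := key0 y ⟨h, hy.2⟩
      simpa [phiAux_zero, abs_of_pos h] using this
    · exact key y ⟨h, hy.2⟩ z ⟨h', hz.2⟩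

lemma log_bound_pos (y : ℝ) (hy : y ∈ Ioo (0:ℝ) 2) :
    1 / 2 ≤ 1 + 1 * y ∧ |Real.log (1 + 1 * y)| ≤ 2 * y := by
  have := hy.1
  refine ⟨by linarith, ?_⟩
  rw [abs_of_nonneg (Real.log_nonneg (by linarith))]
  have := Real.log_le_sub_one_of_pos (x := 1 + 1 * y) (by linarith)
  linarith

lemma log_bound_neg (y : ℝ) (hy : y ∈ Ioo (0:ℝ) (1 / 2)) :
    1 / 2 ≤ 1 + (-1) * y ∧ |Real.log (1 + (-1) * y)| ≤ 2 * y := by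
  obtain ⟨h1, h2⟩ := hy
  refine ⟨by linarith, ?_⟩
  rw [abs_of_nonpos (Real.log_nonpos (by linarith) (by linarith))]
  have := Real.one_sub_inv_le_log_of_pos (x := 1 + (-1) * y) (by linarith)
  have h3 : (1 + (-1) * y)⁻¹ ≤ 1 + 2 * y := by
    rw [inv_le_comm₀ (by linarith) (by linarith), inv_le_iff_one_le_mul₀ (by linarith)]
    nlinarith
  linarith

lemma rpow_holder (ρ : ℝ) (hρ : ρ ∈ Ioc (0:ℝ) 1) (x z : ℝ) (hx : 0 ≤ x) (hz : 0 ≤ z) :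
    |x ^ ρ - z ^ ρ| ≤ |x - z| ^ ρ := by
  wlog h : z ≤ x generalizing x z
  · rw [abs_sub_comm, abs_sub_comm x]
    exact this z x hz hx (by linarith)
  have h1 := Real.rpow_add_le_add_rpow hz (sub_nonneg.2 h) hρ.1.le hρ.2
  have h2 := Real.rpow_le_rpow hz h hρ.1.le
  rw [add_sub_cancel] at h1
  rw [abs_of_nonneg (sub_nonneg.2 h), abs_of_nonneg (by linarith)]
  linarith

lemma omega_lower (ρ : ℝ) (hρ : ρ ∈ Ioc (0:ℝ) 1) (α β h₀ : ℝ) (hh₀ : h₀ ∈ Ioo (0:ℝ) 1)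
    (hαβ : (0 ≤ α ∧ α < ρ ∧ 0 ≤ β ∧ 0 < α + β) ∨ (α = ρ ∧ β = 0)) :
    ∃ C > (0:ℝ), ∀ h ∈ Icc (0:ℝ) 1, h ^ ρ ≤ C * omegaAB α β h₀ h := by
  have small : ∃ C > (0:ℝ), ∀ h ∈ Ioo (0:ℝ) 1, h ^ ρ ≤ C * (h ^ α * (-Real.log h) ^ (-β)) := by
    rcases hαβ with ⟨ha, har, hb, -⟩ | ⟨rfl, rfl⟩
    · set t := (ρ - α) / (β + 1) with ht
      have htpos : 0 < t := div_pos (by linarith) (by linarith)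
      refine ⟨(1 / t) ^ β, by positivity, ?_⟩
      intro h hh
      have hl : 0 < -Real.log h := by have := Real.log_neg hh.1 hh.2; linarith
      have h1 := (Real.abs_log_mul_self_rpow_lt h t hh.1 hh.2.le htpos).le
      have h2 : |Real.log h * h ^ t| = (-Real.log h) * h ^ t := by
        rw [abs_mul, abs_of_neg (by linarith), abs_of_pos (Real.rpow_pos_of_pos hh.1 t)]
      rw [h2] at h1
      have h3 := Real.rpow_le_rpow (by have := Real.rpow_pos_of_pos hh.1 t; positivity) h1 hb
      rw [Real.mul_rpow hl.le (Real.rpow_pos_of_pos hh.1 t).le, ← Real.rpow_mul hh.1.le] at h3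
      have h4 : h ^ (ρ - α) ≤ h ^ (t * β) := by
        apply Real.rpow_le_rpow_of_exponent_ge hh.1 hh.2.le
        have : t * (β + 1) = ρ - α := by rw [ht]; field_simp
        nlinarith
      have h5 : h ^ ρ = h ^ (ρ - α) * h ^ α := by
        rw [← Real.rpow_add hh.1]; congr 1; ring
      have hA := Real.rpow_pos_of_pos hh.1 α
      have hB := Real.rpow_pos_of_pos hl β
      rw [Real.rpow_neg hl.le, h5]
      have : h ^ (ρ - α) ≤ (1 / t) ^ β * ((-Real.log h) ^ β)⁻¹ := by
        rw [← div_eq_mul_inv, le_div_iff₀ hB]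
        calc _ ≤ h ^ (t * β) * (-Real.log h) ^ β := by gcongr
          _ ≤ _ := by linarith
      calc _ ≤ ((1 / t) ^ β * ((-Real.log h) ^ β)⁻¹) * h ^ α := by gcongr
        _ = _ := by ring
    · exact ⟨1, one_pos, fun h hh => by simp⟩
  obtain ⟨C, hC, hs⟩ := small
  set K := h₀ ^ α * (-Real.log h₀) ^ (-β) with hK
  have hKpos : 0 < K := by
    have := Real.log_neg hh₀.1 hh₀.2
    exact mul_pos (Real.rpow_pos_of_pos hh₀.1 _) (Real.rpow_pos_of_pos (by linarith) _)
  refine ⟨max C (1 / K), lt_max_of_lt_left hC, ?_⟩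
  intro h hh
  unfold omegaAB
  split_ifs with c1 c2
  · have : h = 0 := le_antisymm c1 hh.1
    subst this
    simp [Real.zero_rpow hρ.1.ne']
  · have hh1 : h < 1 := c2.trans hh₀.2
    have hpos : 0 < h := lt_of_not_ge c1
    have hl := Real.log_neg hpos hh1
    refine (hs h ⟨hpos, hh1⟩).trans ?_
    apply mul_le_mul_of_nonneg_right (le_max_left _ _)
    exact (mul_pos (Real.rpow_pos_of_pos hpos _) (Real.rpow_pos_of_pos (by linarith) _)).le
  · calc h ^ ρ ≤ 1 := Real.rpow_le_one hh.1 hh.2 hρ.1.le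
      _ = 1 / K * K := by field_simp
      _ ≤ _ := mul_le_mul_of_nonneg_right (le_max_right _ _) hKpos.le

lemma memCmod_of_holder (ρ : ℝ) (hρ : ρ ∈ Ioc (0:ℝ) 1) (α β h₀ : ℝ) (hh₀ : h₀ ∈ Ioo (0:ℝ) 1)
    (hαβ : (0 ≤ α ∧ α < ρ ∧ 0 ≤ β ∧ 0 < α + β) ∨ (α = ρ ∧ β = 0)) (f : ℝ → ℝ) (K : ℝ) (hK : 0 < K)
    (hf : ∀ x ∈ Icc (0:ℝ) 1, ∀ z ∈ Icc (0:ℝ) 1, |f x - f z| ≤ K * |x ^ ρ - z ^ ρ|) :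
    MemCmod (omegaAB α β h₀) f := by
  obtain ⟨C, hC, h⟩ := omega_lower ρ hρ α β h₀ hh₀ hαβ
  refine ⟨K * C, by positivity, ?_⟩
  intro x hx z hz
  have h1 := rpow_holder ρ hρ x z hx.1 hz.1
  have h2 := h |x - z| ⟨abs_nonneg _, by
    rw [abs_le]; constructor <;> linarith [hx.1, hx.2, hz.1, hz.2]⟩
  calc _ ≤ K * |x ^ ρ - z ^ ρ| := hf x hx z hz
    _ ≤ K * (C * omegaAB α β h₀ |x - z|) := by gcongr; linarith
    _ = _ := by ring

lemma ergMax_zero (T f v : ℝ → ℝ) (hf : Measurable f) (hv : Measurable v) (hv1 : ∀ x, |v x| ≤ 1)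
    (K : ℝ) (hfb : ∀ x ∈ Icc (0:ℝ) 1, |f x| ≤ K)
    (h : ∀ x ∈ Icc (0:ℝ) 1, f x + v x - v (T x) ≤ 0) (hT0 : T 0 = 0) (hf0 : f 0 = 0) :
    ergMax T f = 0 := by
  have hub : ∀ r ∈ {r : ℝ | ∃ μ : Measure ℝ, InvariantProb T μ ∧ r = ∫ x, f x ∂μ}, r ≤ 0 := by
    rintro r ⟨μ, ⟨hp, hI, hinv⟩, rfl⟩
    have hT : AEMeasurable T μ := by
      by_contra hc
      rw [Measure.map_of_not_aemeasurable hc] at hinv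
      exact IsProbabilityMeasure.ne_zero μ hinv.symm
    have hae : ∀ᵐ x ∂μ, x ∈ Icc (0:ℝ) 1 := by
      exact (mem_ae_iff_prob_eq_one measurableSet_Icc).2 hI
    have if1 : Integrable f μ :=
      Integrable.of_bound hf.aestronglyMeasurable K (hae.mono fun x hx => by
        simpa [Real.norm_eq_abs] using hfb x hx)
    have iv : Integrable v μ :=
      Integrable.of_bound hv.aestronglyMeasurable 1 (Eventually.of_forall fun x => by
        simpa [Real.norm_eq_abs] using hv1 x)
    have ivT : Integrable (fun x => v (T x)) μ :=
      Integrable.of_bound (hv.comp_aemeasurable hT).aestronglyMeasurable 1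
        (Eventually.of_forall fun x => by simpa [Real.norm_eq_abs] using hv1 (T x))
    have e : ∫ x, v (T x) ∂μ = ∫ x, v x ∂μ := by
      conv_rhs => rw [← hinv]
      rw [integral_map hT hv.aestronglyMeasurable]
    have le : ∫ x, f x ∂μ ≤ ∫ x, (v (T x) - v x) ∂μ := by
      apply integral_mono_ae if1 (ivT.sub iv)
      filter_upwards [hae] with x hx
      have := h x hx
      simp only [Pi.sub_apply]
      linarith
    rw [integral_sub ivT iv, e, sub_self] at le
    exact le
  have hmem : (0:ℝ) ∈ {r : ℝ | ∃ μ : Measure ℝ, InvariantProb T μ ∧ r = ∫ x, f x ∂μ} := by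
    refine ⟨Measure.dirac 0, ⟨inferInstance, ?_, ?_⟩, ?_⟩
    · simp
    · have hE : T =ᵐ[Measure.dirac (0:ℝ)] fun _ => (0:ℝ) := by
        rw [Filter.EventuallyEq, ae_dirac_eq]
        simpa using hT0
      rw [Measure.map_congr hE, Measure.map_const]
      simp
    · simp [hf0]
  unfold ergMax
  exact le_antisymm (csSup_le ⟨0, hmem⟩ hub) (le_csSup ⟨0, hub⟩ hmem)

lemma not_tendsto_sin_log (l : ℝ) :
    ¬ Tendsto (fun n : ℕ => Real.sin (Real.log n)) atTop (𝓝 l) := by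
  intro hs
  have hd : Tendsto (fun n : ℕ => 2 * n) atTop atTop :=
    tendsto_id.const_mul_atTop' (by norm_num)
  have hq : Tendsto (fun n : ℕ => n ^ 2) atTop atTop := tendsto_pow_atTop (by norm_num)
  have hL0 : 0 < Real.log 2 := Real.log_pos (by norm_num)
  have hLne : Real.sin (Real.log 2) ≠ 0 := by
    apply ne_of_gt
    apply Real.sin_pos_of_pos_of_lt_pi hL0
    linarith [Real.log_two_lt_d9, Real.pi_gt_three]
  have hs2 : Tendsto (fun n : ℕ => Real.sin (Real.log n) * Real.cos (Real.log 2)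
      + Real.cos (Real.log n) * Real.sin (Real.log 2)) atTop (𝓝 l) := by
    refine (hs.comp hd).congr' ?_
    filter_upwards [eventually_gt_atTop 0] with n hn
    have : (n:ℝ) ≠ 0 := by positivity
    simp only [Function.comp]
    push_cast
    rw [Real.log_mul (by norm_num) this, add_comm, Real.sin_add]
  set c := (l - l * Real.cos (Real.log 2)) / Real.sin (Real.log 2) with hcdef
  have hc : Tendsto (fun n : ℕ => Real.cos (Real.log n)) atTop (𝓝 c) := by
    refine ((hs2.sub (hs.mul_const (Real.cos (Real.log 2)))).div_const _).congr ?_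
    intro n
    field_simp
    ring
  have e1 : l = 2 * l * c := by
    refine tendsto_nhds_unique (hs.comp hq) ?_
    refine ((hs.const_mul 2).mul hc).congr ?_
    intro n
    simp only [Function.comp]
    push_cast
    rw [Real.log_pow]
    push_cast
    rw [Real.sin_two_mul]
  have e2 : c = 2 * c ^ 2 - 1 := by
    refine tendsto_nhds_unique (hc.comp hq) ?_
    refine (((hc.pow 2).const_mul 2).sub_const 1).congr ?_
    intro n
    simp only [Function.comp]
    push_cast
    rw [Real.log_pow]
    push_cast
    rw [Real.cos_two_mul]
  have e3 : l ^ 2 + c ^ 2 = 1 := by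
    refine tendsto_nhds_unique ((hs.pow 2).add (hc.pow 2)) ?_
    simp [Real.sin_sq_add_cos_sq]
  have e4 : c * Real.sin (Real.log 2) = l - l * Real.cos (Real.log 2) := by
    rw [hcdef]; field_simp
  have hl : l = 0 := by
    have h1 : (c - 1) * (2 * c + 1) = 0 := by linarith
    rcases mul_eq_zero.1 h1 with h | h
    · have : c = 1 := by linarith
      rw [this] at e1; linarith
    · have : c = -1 / 2 := by linarith
      rw [this] at e1; linarith
  rw [hl] at e4 e3
  have : c = 0 := by
    have : c * Real.sin (Real.log 2) = 0 := by linarith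
    exact (mul_eq_zero.1 this).resolve_right hLne
  rw [this] at e3
  norm_num at e3

/-- The reference orbit. -/
def orbAux (ρ : ℝ) (n : ℕ) : ℝ := (1 / (n:ℝ)) ^ (1 / ρ)

lemma orbAux_mem (ρ : ℝ) (hρ : 0 < ρ) (n : ℕ) : orbAux ρ n ∈ Icc (0:ℝ) 1 := by
  unfold orbAux
  refine ⟨by positivity, Real.rpow_le_one (by positivity) ?_ (by positivity)⟩
  rcases Nat.eq_zero_or_pos n with rfl | h
  · simp
  · rw [div_le_one (by positivity)]; exact_mod_cast h

lemma orbAux_pow (ρ : ℝ) (hρ : 0 < ρ) (n : ℕ) : orbAux ρ n ^ ρ = 1 / (n:ℝ) := by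
  unfold orbAux
  rw [← Real.rpow_mul (by positivity), one_div_mul_cancel hρ.ne', Real.rpow_one]

lemma orbAux_tendsto (ρ : ℝ) (hρ : 0 < ρ) : Tendsto (orbAux ρ) atTop (𝓝 0) := by
  have h := (tendsto_one_div_atTop_nhds_zero_nat (𝕜 := ℝ)).rpow_const (p := 1 / ρ)
    (Or.inr (by positivity))
  rwa [Real.zero_rpow (by positivity)] at h

/-- A continuous `u` whose defect with `sin (log n)` is eventually monotone cannot exist. -/
lemma no_u (ρ : ℝ) (hρ : 0 < ρ) (u : ℝ → ℝ) (hu : ContinuousOn u (Icc 0 1)) (s : ℝ)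
    (hs : s = 1 ∨ s = -1) (N : ℕ)
    (h : ∀ n ≥ N, s * (u (orbAux ρ (n + 1)) + Real.sin (Real.log (n + 1 : ℕ)))
      ≤ s * (u (orbAux ρ n) + Real.sin (Real.log n))) : False := by
  have hut : Tendsto (fun n => u (orbAux ρ n)) atTop (𝓝 (u 0)) := by
    have h1 : Tendsto u (𝓝[Icc 0 1] 0) (𝓝 (u 0)) := hu 0 (by simp)
    exact h1.comp (tendsto_nhdsWithin_iff.2 ⟨orbAux_tendsto ρ hρ,
      Eventually.of_forall fun n => orbAux_mem ρ hρ n⟩)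
  set a : ℕ → ℝ := fun n => s * (u (orbAux ρ n) + Real.sin (Real.log n)) with ha
  have hanti : Antitone (fun n => a (n + N)) := by
    apply antitone_nat_of_succ_le
    intro n
    have := h (n + N) (by omega)
    have e : n + 1 + N = n + N + 1 := by ring
    simp only [ha, e]
    exact this
  have hss : s * s = 1 := by rcases hs with rfl | rfl <;> norm_num
  have habs : |s| = 1 := by rcases hs with rfl | rfl <;> norm_num
  obtain ⟨B, hB⟩ := (isCompact_Icc (a := (0:ℝ)) (b := 1)).exists_bound_of_continuousOn hu
  have hbdd : BddBelow (range (fun n => a (n + N))) := by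
    refine ⟨-(B + 1), ?_⟩
    rintro _ ⟨n, rfl⟩
    have h1 : |a (n + N)| ≤ B + 1 := by
      simp only [ha, abs_mul, habs, one_mul]
      refine (abs_add_le _ _).trans (add_le_add ?_ (Real.abs_sin_le_one _))
      simpa [Real.norm_eq_abs] using hB _ (orbAux_mem ρ hρ (n + N))
    exact (abs_le.1 h1).1
  have hlim := tendsto_atTop_ciInf hanti hbdd
  rw [tendsto_add_atTop_iff_nat (f := a)] at hlim
  refine not_tendsto_sin_log _ (((hlim.const_mul s).sub hut).congr ?_)
  intro n
  simp only [ha]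
  rw [← mul_assoc, hss]
  ring

/-- The transfer function. -/
def vAux (ρ x : ℝ) : ℝ := Real.sin (Real.log (x ^ ρ))

lemma vAux_measurable (ρ : ℝ) : Measurable (vAux ρ) := by
  unfold vAux; fun_prop

lemma phiAux_measurable (σ : ℝ) : Measurable (phiAux σ) := by
  unfold phiAux; fun_prop

lemma phiAux_cob (ρ : ℝ) (hρ : 0 < ρ) (σ x : ℝ) (hx : 0 ≤ x) (hs : 0 < 1 + σ * x ^ ρ) :
    phiAux σ (x ^ ρ) = vAux ρ (x / (1 + σ * x ^ ρ) ^ (1 / ρ)) - vAux ρ x := by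
  unfold vAux phiAux
  rw [Real.div_rpow hx (by positivity), ← Real.rpow_mul hs.le, one_div_mul_cancel hρ.ne',
    Real.rpow_one]
  rcases hx.eq_or_lt with rfl | hx
  · simp [Real.zero_rpow hρ.ne']
  · rw [Real.log_div (by positivity) hs.ne']

lemma vAux_orb (ρ : ℝ) (hρ : 0 < ρ) (n : ℕ) :
    vAux ρ (orbAux ρ n) = - Real.sin (Real.log n) := by
  unfold vAux
  rw [orbAux_pow ρ hρ]
  simp

lemma caseG (ρ : ℝ) (hρ : ρ ∈ Ioc (0:ℝ) 1) (G : ℝ → ℝ)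
    (hG : ∀ x ∈ Icc (0:ℝ) 1, G x = x / (1 + x ^ ρ) ^ (1/ρ)) :
    ∃ g : ℝ → ℝ, (∀ x ∈ Icc (0:ℝ) 1, ∀ z ∈ Icc (0:ℝ) 1, |g x - g z| ≤ 4 * |x ^ ρ - z ^ ρ|) ∧
      (¬ ∃ u : ℝ → ℝ, ContinuousOn u (Icc 0 1) ∧ IsSubaction G g u) := by
  have hρ0 := hρ.1
  have hy : ∀ x ∈ Icc (0:ℝ) 1, x ^ ρ ∈ Ico (0:ℝ) 2 := fun x hx =>
    ⟨Real.rpow_nonneg hx.1 _, by linarith [Real.rpow_le_one hx.1 hx.2 hρ0.le]⟩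
  have hcob : ∀ x ∈ Icc (0:ℝ) 1, phiAux 1 (x ^ ρ) = vAux ρ (G x) - vAux ρ x := by
    intro x hx
    rw [phiAux_cob ρ hρ0 1 x hx.1 (by linarith [(hy x hx).1]), hG x hx, one_mul]
  have hm : ergMax G (fun x => phiAux 1 (x ^ ρ)) = 0 := by
    refine ergMax_zero G _ (vAux ρ) ((phiAux_measurable 1).comp (by fun_prop)) (vAux_measurable ρ)
      (fun x => Real.abs_sin_le_one _) 2 (fun x _ => phiAux_abs_le _ _) ?_ ?_ ?_
    · intro x hx
      simp only [hcob x hx]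
      linarith
    · rw [hG 0 (by simp)]; simp
    · simp [Real.zero_rpow hρ0.ne', phiAux_zero]
  refine ⟨fun x => phiAux 1 (x ^ ρ), ?_, ?_⟩
  · intro x hx z hz
    exact phiAux_lip 1 2 (by norm_num) log_bound_pos _ _ (hy x hx) (hy z hz)
  · rintro ⟨u, hu, hsub⟩
    refine no_u ρ hρ0 u hu (-1) (Or.inr rfl) 1 ?_
    intro n hn
    have hx := orbAux_mem ρ hρ0 n
    have h1 := hsub _ hx
    have hnpos : (0:ℝ) < n := by exact_mod_cast hn
    have hGo : G (orbAux ρ n) = orbAux ρ (n + 1) := by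
      rw [hG _ hx, orbAux_pow ρ hρ0]
      unfold orbAux
      rw [← Real.div_rpow (by positivity) (by positivity)]
      congr 1
      push_cast
      field_simp
    rw [hm] at h1
    simp only [hcob _ hx] at h1
    rw [hGo, vAux_orb ρ hρ0, vAux_orb ρ hρ0] at h1
    linarith

lemma caseF (ρ : ℝ) (hρ : ρ ∈ Ioc (0:ℝ) 1) (F : ℝ → ℝ)
    (hFloc : ∃ ε > (0:ℝ), ∀ x ∈ Ico (0:ℝ) ε, F x = x / (1 - x ^ ρ) ^ (1/ρ)) :
    ∃ (K : ℝ) (f : ℝ → ℝ), 0 < K ∧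
      (∀ x ∈ Icc (0:ℝ) 1, ∀ z ∈ Icc (0:ℝ) 1, |f x - f z| ≤ K * |x ^ ρ - z ^ ρ|) ∧
      (¬ ∃ u : ℝ → ℝ, ContinuousOn u (Icc 0 1) ∧ IsSubaction F f u) := by
  have hρ0 := hρ.1
  obtain ⟨ε, hε, hF⟩ := hFloc
  have hερ : 0 < ε ^ ρ := Real.rpow_pos_of_pos hε _
  obtain ⟨δ, hδ, hδ1, hδ2⟩ : ∃ δ > (0:ℝ), 2 * δ < ε ^ ρ ∧ 2 * δ < 1 / 2 :=
    ⟨min (ε ^ ρ / 4) (1 / 8), by positivity,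
      by linarith [min_le_left (ε ^ ρ / 4) (1 / 8)], by linarith [min_le_right (ε ^ ρ / 4) (1 / 8)]⟩
  have hcob : ∀ x, 0 ≤ x → x ^ ρ ≤ 2 * δ → phiAux (-1) (x ^ ρ) = vAux ρ (F x) - vAux ρ x := by
    intro x hx hxd
    have hxe : x < ε := by
      by_contra hc
      have := Real.rpow_le_rpow hε.le (not_lt.1 hc) hρ0.le
      linarith
    rw [phiAux_cob ρ hρ0 (-1) x hx (by linarith), hF x ⟨hx, hxe⟩]
    congr 5
    ring
  set f : ℝ → ℝ := fun x => phiAux (-1) (min (x ^ ρ) (2 * δ))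
    - 4 / δ * max 0 (min (x ^ ρ) (2 * δ) - δ) with hf
  have hfmeas : Measurable f := by
    apply Measurable.sub
    · exact (phiAux_measurable (-1)).comp (by fun_prop)
    · fun_prop
  have hF0 : F 0 = 0 := by rw [hF 0 ⟨le_rfl, hε⟩]; simp
  have hf0 : f 0 = 0 := by
    simp only [hf, Real.zero_rpow hρ0.ne']
    rw [min_eq_left (by linarith), phiAux_zero, max_eq_left (by linarith)]
    simp
  have hK : 0 < 4 + 4 / δ := by positivity
  have hlip : ∀ x ∈ Icc (0:ℝ) 1, ∀ z ∈ Icc (0:ℝ) 1,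
      |f x - f z| ≤ (4 + 4 / δ) * |x ^ ρ - z ^ ρ| := by
    intro x hx z hz
    have h0 : ∀ x ∈ Icc (0:ℝ) 1, min (x ^ ρ) (2 * δ) ∈ Ico (0:ℝ) (1 / 2) := fun x hx =>
      ⟨le_min (Real.rpow_nonneg hx.1 _) (by linarith), (min_le_right _ _).trans_lt hδ2⟩
    have h1 := phiAux_lip (-1) (1 / 2) (by norm_num) log_bound_neg _ _ (h0 x hx) (h0 z hz)
    have h2 : |min (x ^ ρ) (2 * δ) - min (z ^ ρ) (2 * δ)| ≤ |x ^ ρ - z ^ ρ| := by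
      have := abs_min_sub_min_le_max (x ^ ρ) (2 * δ) (z ^ ρ) (2 * δ)
      simpa using this
    simp only [hf]
    set p := min (x ^ ρ) (2 * δ)
    set q := min (z ^ ρ) (2 * δ)
    have h3 : |max 0 (p - δ) - max 0 (q - δ)| ≤ |p - q| := by
      have := abs_max_sub_max_le_max 0 (p - δ) 0 (q - δ)
      simpa using this
    have e : phiAux (-1) p - 4 / δ * max 0 (p - δ) - (phiAux (-1) q - 4 / δ * max 0 (q - δ))
      = (phiAux (-1) p - phiAux (-1) q) - 4 / δ * (max 0 (p - δ) - max 0 (q - δ)) := by ring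
    rw [e]
    calc _ ≤ |phiAux (-1) p - phiAux (-1) q| + |4 / δ * (max 0 (p - δ) - max 0 (q - δ))| :=
          abs_sub _ _
      _ ≤ 4 * |p - q| + 4 / δ * |p - q| := by
          rw [abs_mul, abs_of_pos (a := 4 / δ) (by positivity)]
          gcongr
      _ = (4 + 4 / δ) * |p - q| := by ring
      _ ≤ _ := by gcongr
  have hfb : ∀ x ∈ Icc (0:ℝ) 1, |f x| ≤ 4 + 4 / δ := by
    intro x hx
    have h1 := hlip x hx 0 (by simp)
    rw [hf0, Real.zero_rpow hρ0.ne', sub_zero, sub_zero,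
      abs_of_nonneg (Real.rpow_nonneg hx.1 _)] at h1
    have h2 := Real.rpow_le_one hx.1 hx.2 hρ0.le
    nlinarith
  have hm : ergMax F f = 0 := by
    refine ergMax_zero F f (vAux ρ) hfmeas (vAux_measurable ρ)
      (fun x => Real.abs_sin_le_one _) _ hfb ?_ hF0 hf0
    intro x hx
    rcases le_or_gt (x ^ ρ) (2 * δ) with h | h
    · simp only [hf]
      rw [min_eq_left h, hcob x hx.1 h]
      have : 0 ≤ 4 / δ * max 0 (x ^ ρ - δ) := by positivity
      linarith
    · simp only [hf]
      rw [min_eq_right h.le, max_eq_right (by linarith)]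
      have e : 4 / δ * (2 * δ - δ) = 4 := by field_simp; ring
      rw [e]
      have h1 := (abs_le.1 (phiAux_abs_le (-1) (2 * δ))).2
      have h2 : vAux ρ x ≤ 1 := Real.sin_le_one _
      have h3 : -1 ≤ vAux ρ (F x) := Real.neg_one_le_sin _
      linarith
  refine ⟨4 + 4 / δ, f, hK, hlip, ?_⟩
  rintro ⟨u, hu, hsub⟩
  obtain ⟨N, hN⟩ := exists_nat_gt (1 / δ)
  refine no_u ρ hρ0 u hu 1 (Or.inl rfl) N ?_
  intro n hn
  have hnd : 1 / δ < n := hN.trans_le (by exact_mod_cast hn)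
  have hnpos : (0:ℝ) < n := lt_trans (by positivity) hnd
  have hx := orbAux_mem ρ hρ0 (n + 1)
  have hpow := orbAux_pow ρ hρ0 (n + 1)
  have hyd : orbAux ρ (n + 1) ^ ρ ≤ δ := by
    rw [hpow]
    push_cast
    rw [div_le_iff₀ (by positivity)]
    rw [div_lt_iff₀ hδ] at hnd
    nlinarith
  have hxe : orbAux ρ (n + 1) < ε := by
    by_contra hc
    have := Real.rpow_le_rpow hε.le (not_lt.1 hc) hρ0.le
    linarith
  have h1 := hsub _ hx
  have hFo : F (orbAux ρ (n + 1)) = orbAux ρ n := by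
    rw [hF _ ⟨hx.1, hxe⟩, hpow]
    unfold orbAux
    have e : (1:ℝ) - 1 / ((n + 1 : ℕ) : ℝ) = n / ((n + 1 : ℕ) : ℝ) := by
      push_cast
      field_simp
      ring
    rw [e, ← Real.div_rpow (by positivity) (by positivity)]
    congr 1
    field_simp
  have hfx : f (orbAux ρ (n + 1)) = vAux ρ (F (orbAux ρ (n + 1))) - vAux ρ (orbAux ρ (n + 1)) := by
    simp only [hf]
    rw [min_eq_left (by linarith), max_eq_left (by linarith), hcob _ hx.1 (by linarith)]
    ring
  rw [hm, hfx, hFo, vAux_orb ρ hρ0, vAux_orb ρ hρ0] at h1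
  linarith

theorem farey_no_continuous_subaction
    (ρ : ℝ) (hρ : ρ ∈ Ioc (0:ℝ) 1)
    (F G : ℝ → ℝ)
    (hFmaps : MapsTo F (Icc 0 1) (Icc 0 1))
    (hFloc : ∃ ε > (0:ℝ), ∀ x ∈ Ico (0:ℝ) ε, F x = x / (1 - x ^ ρ) ^ (1/ρ))
    (hGmaps : MapsTo G (Icc 0 1) (Icc 0 1))
    (hG : ∀ x ∈ Icc (0:ℝ) 1, G x = x / (1 + x ^ ρ) ^ (1/ρ))
    (α β h₀ : ℝ) (hh₀ : h₀ ∈ Ioo (0:ℝ) 1)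
    (hconc : ConcaveModulus (omegaAB α β h₀))
    (hαβ : (0 ≤ α ∧ α < ρ ∧ 0 ≤ β ∧ 0 < α + β) ∨ (α = ρ ∧ β = 0)) :
    ∃ f g : ℝ → ℝ, MemCmod (omegaAB α β h₀) f ∧ MemCmod (omegaAB α β h₀) g ∧
      (¬ ∃ u : ℝ → ℝ, ContinuousOn u (Icc 0 1) ∧ IsSubaction F f u) ∧
      (¬ ∃ u : ℝ → ℝ, ContinuousOn u (Icc 0 1) ∧ IsSubaction G g u) := by
  obtain ⟨g, hg, hgu⟩ := caseG ρ hρ G hG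
  obtain ⟨K, f, hK, hf, hfu⟩ := caseF ρ hρ F hFloc
  exact ⟨f, g, memCmod_of_holder ρ hρ α β h₀ hh₀ hαβ f K hK hf,
    memCmod_of_holder ρ hρ α β h₀ hh₀ hαβ g 4 (by norm_num) hg, hfu, hgu⟩


end
end

section
/- Let T(x) = x(1 − V(x)) for x near 0, where T is invertible near 0 and V : [0,∞) → (0,1) is continuous, increasing, and regularly varying at 0 with index σ > 0. Let b be the inverse function of x ↦ 1/V(1/x) and let (w_n) be defined by w_{n+1} = T(w_n) with w₀ > 0 close enough to 0. Then w_n ~ 1/(σ^{1/σ} b(n)) as n → ∞, that is, lim_{n→∞} w_n · σ^{1/σ} b(n) = 1. -/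
open Set Filter Topology Real

lemma ind_bdd (f : ℕ → ℝ) (N : ℕ) (h : ∀ n ≥ N, ∃ p < n, f n ≤ f p) : ∃ C, ∀ n, f n ≤ C := by
  obtain ⟨C, hC⟩ := ((Set.finite_Iio N).image f).bddAbove
  refine ⟨C, fun n => ?_⟩
  induction n using Nat.strong_induction_on with
  | _ n ih =>
    by_cases hn : N ≤ n
    · obtain ⟨p, hp, hfp⟩ := h n hn
      exact hfp.trans (ih p hp)
    · exact hC ⟨n, by simpa using hn, rfl⟩

lemma V_tendsto (V : ℝ → ℝ) (σ : ℝ) (hσ : 0 < σ)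
    (hVcont : ContinuousOn V (Ici 0))
    (hVrange : ∀ x > (0:ℝ), V x ∈ Ioo (0:ℝ) 1)
    (hVreg : RegVary0 V σ) : V 0 = 0 ∧ Tendsto V (𝓝[>] 0) (𝓝 0) := by
  have h1 : Tendsto V (𝓝[>] 0) (𝓝 (V 0)) :=
    (hVcont 0 (by simp)).mono_left (nhdsWithin_mono _ Ioi_subset_Ici_self)
  have h0 : 0 ≤ V 0 := by
    refine ge_of_tendsto h1 ?_
    filter_upwards [self_mem_nhdsWithin] with x hx
    exact (hVrange x hx).1.le
  have h2 : V 0 = 0 := by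
    by_contra hne
    have h3 : Tendsto (fun x : ℝ => 2 * x) (𝓝[>] 0) (𝓝[>] 0) := by
      refine tendsto_nhdsWithin_iff.2 ⟨?_, ?_⟩
      · have : Tendsto (fun x : ℝ => 2 * x) (𝓝 0) (𝓝 (2 * 0)) :=
          (continuous_const.mul continuous_id).tendsto 0
        rw [mul_zero] at this
        exact this.mono_left nhdsWithin_le_nhds
      · filter_upwards [self_mem_nhdsWithin] with x hx
        have : (0:ℝ) < x := hx
        show (0:ℝ) < 2 * x
        positivity
    have h4 := (h1.comp h3).div h1 hne
    rw [div_self hne] at h4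
    have h5 := tendsto_nhds_unique h4 (hVreg 2 (by norm_num))
    have h6 : (1:ℝ) < 2 ^ σ := Real.one_lt_rpow (by norm_num) hσ
    linarith
  rw [h2] at h1
  exact ⟨h2, h1⟩

lemma log_bounds (V : ℝ → ℝ) (w : ℕ → ℝ)
    (hVmono : StrictMonoOn V (Ici 0))
    (hVrange : ∀ x > (0:ℝ), V x ∈ Ioo (0:ℝ) 1)
    (hpos : ∀ n, 0 < w n) (hanti : Antitone w)
    (hrec : ∀ n, w (n + 1) = w n * (1 - V (w n))) (p n : ℕ) (hpn : p ≤ n) :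
    ((n:ℝ) - p) * V (w n) ≤ log (w p) - log (w n) ∧
    log (w p) - log (w n) ≤ ((n:ℝ) - p) * (V (w p) / (1 - V (w p))) := by
  have hVa : ∀ m k, m ≤ k → V (w k) ≤ V (w m) := fun m k h =>
    hVmono.monotoneOn (hpos k).le (hpos m).le (hanti h)
  induction n, hpn using Nat.le_induction with
  | base => simp
  | succ n hn ih =>
    have hv := hVrange _ (hpos n)
    have hvp := hVrange _ (hpos p)
    have e : log (w (n+1)) = log (w n) + log (1 - V (w n)) := by
      rw [hrec, Real.log_mul (hpos n).ne' (by linarith [hv.2])]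
    have l1 : log (1 - V (w n)) ≤ - V (w n) := by
      have := Real.log_le_sub_one_of_pos (show 0 < 1 - V (w n) by linarith [hv.2])
      linarith
    have l2 : - (V (w n) / (1 - V (w n))) ≤ log (1 - V (w n)) := by
      have hp : 0 < 1 - V (w n) := by linarith [hv.2]
      have := Real.one_sub_inv_le_log_of_pos hp
      have e2 : - (V (w n) / (1 - V (w n))) = 1 - (1 - V (w n))⁻¹ := by
        field_simp; ring
      linarith
    have l3 : V (w n) / (1 - V (w n)) ≤ V (w p) / (1 - V (w p)) := by
      have := hVa p n hn
      apply div_le_div₀ hvp.1.le this (by linarith [hvp.2]) (by linarith)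
    have l4 : V (w (n+1)) ≤ V (w n) := hVa n (n+1) (by omega)
    have hc : (0:ℝ) ≤ (n:ℝ) - p := by
      have : (p:ℝ) ≤ n := by exact_mod_cast hn
      linarith
    push_cast
    constructor
    · nlinarith [ih.1, mul_le_mul_of_nonneg_left l4 hc]
    · rw [e]; nlinarith [ih.2]

/-- last index at which the orbit is at least `r * w n` -/
lemma exists_idx (w : ℕ → ℝ) (r : ℝ) (n : ℕ) (hr : 1 < r) (hpos : ∀ n, 0 < w n)
    (h0 : r * w n ≤ w 0) : ∃ p < n, r * w n ≤ w p ∧ w (p + 1) < r * w n := by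
  classical
  have hex : ∃ q, w q < r * w n := ⟨n, by nlinarith [hpos n]⟩
  have hs := Nat.find_spec hex
  have hm : Nat.find hex ≤ n := Nat.find_min' hex (by nlinarith [hpos n])
  rcases hq : Nat.find hex with _ | p
  · rw [hq] at hs; linarith
  · rw [hq] at hs hm
    refine ⟨p, by omega, ?_, hs⟩
    exact not_lt.1 (Nat.find_min hex (by omega))

lemma exp_slope (σ : ℝ) : Tendsto (fun s : ℝ => (exp (σ * s) - 1) / s) (𝓝[>] 0) (𝓝 σ) := by
  have h : HasDerivAt (fun s : ℝ => exp (σ * s)) (exp (σ * 0) * (σ * 1)) 0 :=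
    ((hasDerivAt_id (0:ℝ)).const_mul σ).exp
  have h2 := h.tendsto_slope_zero_right
  simp only [mul_zero, exp_zero, one_mul, mul_one, zero_add, smul_eq_mul] at h2
  refine h2.congr fun s => ?_
  rw [div_eq_inv_mul]

lemma seq_lim (V : ℝ → ℝ) (σ : ℝ) (w : ℕ → ℝ) (hσ : 0 < σ)
    (hVmono : StrictMonoOn V (Ici 0))
    (hVrange : ∀ x > (0:ℝ), V x ∈ Ioo (0:ℝ) 1)
    (hVreg : RegVary0 V σ) (hV0 : Tendsto V (𝓝[>] 0) (𝓝 0))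
    (hpos : ∀ n, 0 < w n) (hanti : Antitone w)
    (hrec : ∀ n, w (n + 1) = w n * (1 - V (w n)))
    (hhalf : ∀ n, V (w n) ≤ 1 / 2)
    (hw : Tendsto w atTop (𝓝 0)) :
    Tendsto (fun n : ℕ => n * V (w n)) atTop (𝓝 (1 / σ)) := by
  have hw' : Tendsto w atTop (𝓝[>] 0) :=
    tendsto_nhdsWithin_iff.2 ⟨hw, Eventually.of_forall hpos⟩
  have hVw : Tendsto (fun n => V (w n)) atTop (𝓝 0) := hV0.comp hw'
  have hscale : ∀ r > (0:ℝ), Tendsto (fun n => r * w n) atTop (𝓝[>] 0) := fun r hr => by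
    refine tendsto_nhdsWithin_iff.2 ⟨by simpa using hw.const_mul r, Eventually.of_forall ?_⟩
    intro n
    exact mul_pos hr (hpos n)
  have hVle : ∀ x y, 0 < x → x ≤ y → V x ≤ V y := fun x y hx hxy =>
    hVmono.monotoneOn hx.le (hx.le.trans hxy) hxy
  have hbig : ∀ r > (0:ℝ), ∀ᶠ n in atTop, r * w n ≤ w 0 := fun r hr => by
    have := (hscale r hr).mono_right nhdsWithin_le_nhds
    exact (this.eventually (gt_mem_nhds (hpos 0))).mono fun n hn => le_of_lt hn
  -- upper bound
  have hup : ∀ A > 1 / σ, ∃ C, ∀ n : ℕ, (n:ℝ) - A / V (w n) ≤ C := by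
    intro A hA
    have hA0 : 0 < A := lt_trans (by positivity) hA
    -- choose s with s < A (1 - exp(-σ s))
    obtain ⟨s, hs0, hs⟩ : ∃ s > 0, s < A * (1 - exp (-σ * s)) := by
      have h1 := exp_slope (-σ)
      have h2 : -σ < -(1 / A) := by
        rw [neg_lt_neg_iff, div_lt_iff₀ hA0]
        rwa [gt_iff_lt, div_lt_iff₀ hσ, mul_comm] at hA
      obtain ⟨s, hs1, hs2⟩ := ((h1.eventually (gt_mem_nhds h2)).and self_mem_nhdsWithin).exists
      have hs2 : 0 < s := hs2
      refine ⟨s, hs2, ?_⟩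
      rw [div_lt_iff₀ hs2] at hs1
      have := mul_lt_mul_of_pos_left hs1 hA0
      have e : A * (-(1 / A) * s) = - s := by field_simp
      rw [e] at this
      nlinarith
    -- ratio V(w n) / V(e^s w n) → e^{-σ s}
    have hrat : Tendsto (fun n => V (w n) / V (exp s * w n)) atTop (𝓝 (exp (-σ * s))) := by
      have h1 := (hVreg (exp (-s)) (exp_pos _)).comp (hscale (exp s) (exp_pos s))
      rw [← Real.exp_mul] at h1
      have e1 : -s * σ = -σ * s := by ring
      rw [e1] at h1
      refine h1.congr fun n => ?_
      simp only [Function.comp]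
      rw [← mul_assoc, ← exp_add]; simp
    have hev : ∀ᶠ n in atTop, V (w n) + s < A * (1 - V (w n) / V (exp s * w n)) := by
      have hl : Tendsto (fun n => V (w n) + s) atTop (𝓝 (0 + s)) := hVw.add_const s
      have hr : Tendsto (fun n => A * (1 - V (w n) / V (exp s * w n))) atTop
          (𝓝 (A * (1 - exp (-σ * s)))) := (hrat.const_sub 1).const_mul A
      exact hl.eventually_lt hr (by simpa using hs)
    obtain ⟨N, hN⟩ := eventually_atTop.1 (hev.and (hbig (exp s) (exp_pos s)))
    refine ind_bdd _ N fun n hn => ?_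
    obtain ⟨h1, h2⟩ := hN n hn
    obtain ⟨p, hpn, hp1, hp2⟩ := exists_idx w (exp s) n (by simpa using hs0) hpos h2
    refine ⟨p, hpn, ?_⟩
    have hL := (log_bounds V w hVmono hVrange hpos hanti hrec (p+1) n hpn).1
    have hlog : log (w (p+1)) ≤ s + log (w n) := by
      have := Real.log_le_log (hpos _) hp2.le
      rwa [Real.log_mul (exp_pos s).ne' (hpos n).ne', Real.log_exp] at this
    push_cast at hL
    have hvn := (hVrange _ (hpos n)).1
    have hvp := (hVrange _ (hpos p)).1
    have hve := (hVrange (exp s * w n) (mul_pos (exp_pos s) (hpos n))).1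
    have hle : V (exp s * w n) ≤ V (w p) :=
      hVle _ _ (mul_pos (exp_pos s) (hpos n)) hp1
    have h3 : V (w n) / V (w p) ≤ V (w n) / V (exp s * w n) :=
      div_le_div_of_nonneg_left hvn.le hve hle
    have h4 : ((n:ℝ) - p) * V (w n) ≤ A * (1 - V (w n) / V (w p)) := by
      have := mul_le_mul_of_nonneg_left h3 hA0.le
      nlinarith
    have h5 : (n:ℝ) - p ≤ A * (1 - V (w n) / V (w p)) / V (w n) := (le_div_iff₀ hvn).2 h4
    have e : A * (1 - V (w n) / V (w p)) / V (w n) = A / V (w n) - A / V (w p) := by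
      field_simp
    linarith
  -- lower bound
  have hlo : ∀ A < 1 / σ, 0 < A → ∃ C, ∀ n : ℕ, A / V (w n) - (n:ℝ) ≤ C := by
    intro A hA hA0
    obtain ⟨s, hs0, hs⟩ : ∃ s > 0, A * (exp (σ * s) - 1) < s := by
      have h1 := exp_slope σ
      have h2 : σ < 1 / A := by
        rw [lt_div_iff₀ hA0]
        rwa [lt_div_iff₀ hσ, mul_comm] at hA
      obtain ⟨s, hs1, hs2⟩ := ((h1.eventually (gt_mem_nhds h2)).and self_mem_nhdsWithin).exists
      have hs2 : 0 < s := hs2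
      refine ⟨s, hs2, ?_⟩
      rw [div_lt_iff₀ hs2] at hs1
      have := mul_lt_mul_of_pos_left hs1 hA0
      have e : A * ((1 / A) * s) = s := by field_simp
      rwa [e] at this
    obtain ⟨t, ht, hst⟩ : ∃ t, A * (exp (σ * t) - 1) < s ∧ s < t := by
      have hc : Continuous (fun t : ℝ => A * (exp (σ * t) - 1)) := by fun_prop
      have h1 : ∀ᶠ t in 𝓝[>] s, A * (exp (σ * t) - 1) < s :=
        (hc.tendsto s).mono_left nhdsWithin_le_nhds |>.eventually (gt_mem_nhds hs)
      exact (h1.and self_mem_nhdsWithin).exists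
    have hrat : Tendsto (fun n => V (exp t * w n) / V (w n)) atTop (𝓝 (exp (σ * t))) := by
      have h1 := (hVreg (exp t) (exp_pos _)).comp hw'
      rw [← Real.exp_mul, mul_comm t σ] at h1
      exact h1
    have hVs : ∀ r > (0:ℝ), Tendsto (fun n => V (r * w n)) atTop (𝓝 0) :=
      fun r hr => hV0.comp (hscale r hr)
    have hev : ∀ᶠ n in atTop, A * (V (exp t * w n) / V (w n) - 1) < s * (1 - V (exp t * w n)) := by
      have hl : Tendsto (fun n => A * (V (exp t * w n) / V (w n) - 1)) atTop
          (𝓝 (A * (exp (σ * t) - 1))) := (hrat.sub_const 1).const_mul A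
      have hr : Tendsto (fun n => s * (1 - V (exp t * w n))) atTop (𝓝 (s * (1 - 0))) :=
        ((hVs _ (exp_pos t)).const_sub 1).const_mul s
      exact hl.eventually_lt hr (by simpa using ht)
    have hev2 : ∀ᶠ n in atTop, V (2 * exp s * w n) < 1 - exp (s - t) := by
      refine (hVs (2 * exp s) (by positivity)).eventually (gt_mem_nhds ?_)
      have : exp (s - t) < 1 := by rw [Real.exp_lt_one_iff]; linarith
      linarith
    obtain ⟨N, hN⟩ := eventually_atTop.1 ((hev.and hev2).and (hbig (exp s) (exp_pos s)))
    refine ind_bdd _ N fun n hn => ?_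
    obtain ⟨⟨h1, h1'⟩, h2⟩ := hN n hn
    obtain ⟨p, hpn, hp1, hp2⟩ := exists_idx w (exp s) n (by simpa using hs0) hpos h2
    refine ⟨p, hpn, ?_⟩
    have hU := (log_bounds V w hVmono hVrange hpos hanti hrec p n hpn.le).2
    have hlog : s + log (w n) ≤ log (w p) := by
      have := Real.log_le_log (mul_pos (exp_pos s) (hpos n)) hp1
      rwa [Real.log_mul (exp_pos s).ne' (hpos n).ne', Real.log_exp] at this
    have hvn := (hVrange _ (hpos n)).1
    have hvp := (hVrange _ (hpos p)).1
    have hvp1 := (hVrange _ (hpos p)).2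
    have hwp2 : w p ≤ 2 * exp s * w n := by
      have := hrec p
      have := hhalf p
      nlinarith [hpos p]
    have hVp : V (w p) ≤ 1 - exp (s - t) := (hVle _ _ (hpos p) hwp2).trans h1'.le
    have hwp : w p ≤ exp t * w n := by
      have a1 : w p * exp (s - t) ≤ exp s * w n := by
        have := hrec p
        nlinarith [hpos p]
      have a2 : exp (s - t) * exp t = exp s := by rw [← exp_add]; ring_nf
      rw [← a2] at a1
      have := exp_pos (s - t)
      by_contra hcon
      nlinarith
    have hle : V (w p) ≤ V (exp t * w n) := hVle _ _ (hpos p) hwp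
    have h3 : V (w p) / V (w n) ≤ V (exp t * w n) / V (w n) :=
      div_le_div_of_nonneg_right hle hvn.le
    have h4 : s * (1 - V (w p)) ≤ ((n:ℝ) - p) * V (w p) := by
      have : s ≤ ((n:ℝ) - p) * (V (w p) / (1 - V (w p))) := by linarith
      rw [← mul_div_assoc, le_div_iff₀ (by linarith)] at this
      exact this
    have h5 : A * (V (w p) / V (w n) - 1) ≤ ((n:ℝ) - p) * V (w p) := by
      have a1 := mul_le_mul_of_nonneg_left h3 hA0.le
      have a2 := mul_le_mul_of_nonneg_left hle hs0.le
      nlinarith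
    have h6 : A * (V (w p) / V (w n) - 1) / V (w p) ≤ (n:ℝ) - p := (div_le_iff₀ hvp).2 h5
    have e : A * (V (w p) / V (w n) - 1) / V (w p) = A / V (w n) - A / V (w p) := by
      field_simp
    linarith
  refine tendsto_order.2 ⟨fun a ha => ?_, fun a ha => ?_⟩
  · obtain ⟨A, hA1, hA2⟩ := exists_between (max_lt ha (show 0 < 1 / σ by positivity))
    obtain ⟨C, hC⟩ := hlo A hA2 ((le_max_right _ _).trans_lt hA1)
    have hl : Tendsto (fun n => A - C * V (w n)) atTop (𝓝 (A - C * 0)) :=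
      (hVw.const_mul C).const_sub A
    filter_upwards [hl.eventually (lt_mem_nhds
      (show a < A - C * 0 by have := (le_max_left a 0).trans_lt hA1; linarith))] with n hn
    have hv := (hVrange _ (hpos n)).1
    have := mul_le_mul_of_nonneg_right (hC n) hv.le
    rw [sub_mul, div_mul_cancel₀ _ hv.ne'] at this
    linarith
  · obtain ⟨A, hA1, hA2⟩ := exists_between ha
    obtain ⟨C, hC⟩ := hup A hA1
    have hl : Tendsto (fun n => A + C * V (w n)) atTop (𝓝 (A + C * 0)) :=
      (hVw.const_mul C).const_add A
    filter_upwards [hl.eventually (gt_mem_nhds (show A + C * 0 < a by linarith))] with n hn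
    have hv := (hVrange _ (hpos n)).1
    have := mul_le_mul_of_nonneg_right (hC n) hv.le
    rw [sub_mul, div_mul_cancel₀ _ hv.ne'] at this
    linarith

theorem orbit_asymptotics
    (T V b : ℝ → ℝ) (σ : ℝ) (hσ : 0 < σ)
    (hVcont : ContinuousOn V (Ici 0)) (hVmono : StrictMonoOn V (Ici 0))
    (hVrange : ∀ x > (0:ℝ), V x ∈ Ioo (0:ℝ) 1)
    (hVreg : RegVary0 V σ)
    (hloc : ∃ ε > (0:ℝ), InjOn T (Ico 0 ε) ∧ ∀ x ∈ Ico (0:ℝ) ε, T x = x * (1 - V x))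
    (hb : ∀ x > (0:ℝ), b (1 / V (1 / x)) = x) :
    ∃ δ > (0:ℝ), ∀ w : ℕ → ℝ, w 0 ∈ Ioo 0 δ → (∀ n, w (n + 1) = T (w n)) →
      Tendsto (fun n : ℕ => w n * (σ ^ (1 / σ) * b n)) atTop (𝓝 1) := by
  obtain ⟨ε, hε, -, hT⟩ := hloc
  obtain ⟨hV00, hV0⟩ := V_tendsto V σ hσ hVcont hVrange hVreg
  obtain ⟨d, hd1, hd0⟩ := ((hV0.eventually (gt_mem_nhds (show (0:ℝ) < 1 / 2 by norm_num))).and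
    self_mem_nhdsWithin).exists
  have hd0 : 0 < d := hd0
  have hVle : ∀ x y, 0 < x → x ≤ y → V x ≤ V y := fun x y hx hxy =>
    hVmono.monotoneOn hx.le (hx.le.trans hxy) hxy
  refine ⟨min d ε, lt_min hd0 hε, fun w hw0 hwT => ?_⟩
  have hin : ∀ n, w n ∈ Ioo 0 (min d ε) := by
    intro n
    induction n with
    | zero => exact hw0
    | succ n ih =>
      have hv := hVrange _ ih.1
      rw [hwT, hT _ ⟨ih.1.le, ih.2.trans_le (min_le_right _ _)⟩]
      refine ⟨mul_pos ih.1 (by linarith [hv.2]), lt_trans ?_ ih.2⟩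
      nlinarith [ih.1, hv.1, mul_pos ih.1 hv.1]
  have hpos : ∀ n, 0 < w n := fun n => (hin n).1
  have hrec : ∀ n, w (n + 1) = w n * (1 - V (w n)) := fun n => by
    rw [hwT, hT _ ⟨(hpos n).le, (hin n).2.trans_le (min_le_right _ _)⟩]
  have hanti : Antitone w := antitone_nat_of_succ_le fun n => by
    rw [hrec]; nlinarith [hpos n, mul_pos (hpos n) (hVrange _ (hpos n)).1]
  have hhalf : ∀ n, V (w n) ≤ 1 / 2 := fun n =>
    (hVle _ _ (hpos n) ((hin n).2.le.trans (min_le_left _ _))).trans hd1.le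
  have hw : Tendsto w atTop (𝓝 0) := by
    have hbd : BddBelow (range w) := ⟨0, by rintro _ ⟨n, rfl⟩; exact (hpos n).le⟩
    have hl := tendsto_atTop_ciInf hanti hbd
    set l := ⨅ n, w n with hldef
    have hl0 : 0 ≤ l := ge_of_tendsto' hl fun n => (hpos n).le
    have hle : ∀ n, l ≤ w n := fun n => ciInf_le hbd n
    rcases hl0.eq_or_lt with h | h
    · rw [← h] at hl; exact hl
    · exfalso
      have h1 : l ≤ l * (1 - V l) := by
        refine le_of_tendsto_of_tendsto' (hl.comp (tendsto_add_atTop_nat 1))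
          (hl.mul_const (1 - V l)) fun n => ?_
        simp only [Function.comp, hrec]
        have := hVle _ _ h (hle n)
        exact mul_le_mul_of_nonneg_left (by linarith) (hpos n).le
      nlinarith [mul_pos h (hVrange _ h).1]
  have key := seq_lim V σ w hσ hVmono hVrange hVreg hV0 hpos hanti hrec hhalf hw
  have hone : ∀ᶠ n : ℕ in atTop, (1:ℝ) / n < V 1 :=
    tendsto_one_div_atTop_nhds_zero_nat.eventually (gt_mem_nhds (hVrange 1 one_pos).1)
  have hy : ∀ n : ℕ, ∃ y : ℝ, 0 < y ∧ (0 < n → (1:ℝ) / n < V 1 → V y = 1 / n ∧ b n = 1 / y) := by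
    intro n
    by_cases h : 0 < n ∧ (1:ℝ) / n < V 1
    · have hn : (0:ℝ) < n := by exact_mod_cast h.1
      have hiv := intermediate_value_Icc (zero_le_one (α := ℝ))
        (hVcont.mono Icc_subset_Ici_self)
      obtain ⟨y, hy, hVy⟩ := hiv (show (1:ℝ)/n ∈ Icc (V 0) (V 1) from
        ⟨by rw [hV00]; positivity, h.2.le⟩)
      have hy0 : 0 < y := by
        rcases hy.1.eq_or_lt with h0 | h0
        · rw [← h0, hV00] at hVy
          have : (0:ℝ) < 1 / n := by positivity
          linarith
        · exact h0
      refine ⟨y, hy0, fun _ _ => ⟨hVy, ?_⟩⟩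
      have := hb (1 / y) (by positivity)
      rwa [one_div_one_div, hVy, one_div_one_div] at this
    · exact ⟨1, one_pos, fun h1 h2 => absurd ⟨h1, h2⟩ h⟩
  choose y hy0 hy using hy
  have hev : ∀ᶠ n : ℕ in atTop, V (y n) = 1 / n ∧ b n = 1 / y n := by
    filter_upwards [hone, eventually_gt_atTop 0] with n h1 h2 using hy n h2 h1
  have hylim : Tendsto y atTop (𝓝[>] 0) := by
    refine tendsto_nhdsWithin_iff.2 ⟨?_, Eventually.of_forall hy0⟩
    refine tendsto_order.2 ⟨fun a ha => Eventually.of_forall fun n => ha.trans (hy0 n),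
      fun a ha => ?_⟩
    filter_upwards [hev, tendsto_one_div_atTop_nhds_zero_nat.eventually
      (gt_mem_nhds (hVrange a ha).1)] with n h1 h2
    by_contra hcon
    have := hVle _ _ ha (not_lt.1 hcon)
    linarith [h1.1]
  have hq : Tendsto (fun n => V (w n) / V (y n)) atTop (𝓝 (1 / σ)) := by
    refine key.congr' ?_
    filter_upwards [hev] with n h
    rw [h.1, div_div_eq_mul_div, div_one, mul_comm]
  -- threshold
  set c := σ ^ (1 / σ) with hc
  have hc0 : 0 < c := Real.rpow_pos_of_pos hσ _
  have hcs : ∀ a > 0, (a / c) ^ σ = a ^ σ * (1 / σ) := by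
    intro a ha
    rw [Real.div_rpow ha.le hc0.le, hc, ← Real.rpow_mul hσ.le, one_div_mul_cancel hσ.ne',
      Real.rpow_one]
    ring
  have main : Tendsto (fun n => w n * (c * (1 / y n))) atTop (𝓝 1) := by
    refine tendsto_order.2 ⟨fun a ha => ?_, fun a ha => ?_⟩
    · by_cases ha0 : 0 < a
      · have hr := (hVreg (a / c) (by positivity)).comp hylim
        have hlt : (a / c) ^ σ < 1 / σ := by
          rw [hcs a ha0]
          have := Real.rpow_lt_one ha0.le ha hσ
          have h2 : 0 < 1 / σ := by positivity
          nlinarith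
        filter_upwards [hr.eventually_lt hq hlt] with n hn
        simp only [Function.comp] at hn
        rw [div_lt_div_iff_of_pos_right (hVrange _ (hy0 n)).1] at hn
        have hlt2 : a / c * y n < w n := by
          by_contra hcon
          exact absurd hn (not_lt.2 (hVle _ _ (hpos n) (not_lt.1 hcon)))
        have hyn := hy0 n
        have e : w n * (c * (1 / y n)) = w n * c / y n := by ring
        rw [e, lt_div_iff₀ hyn]
        rwa [div_mul_eq_mul_div, div_lt_iff₀ hc0] at hlt2
      · refine Eventually.of_forall fun n => (not_lt.1 ha0).trans_lt ?_
        have := hy0 n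
        have := hpos n
        positivity
    · have ha0 : 0 < a := by linarith
      have hr := (hVreg (a / c) (by positivity)).comp hylim
      have hlt : 1 / σ < (a / c) ^ σ := by
        rw [hcs a ha0]
        have := Real.one_lt_rpow ha hσ
        have h2 : 0 < 1 / σ := by positivity
        nlinarith
      filter_upwards [hq.eventually_lt hr hlt] with n hn
      simp only [Function.comp] at hn
      rw [div_lt_div_iff_of_pos_right (hVrange _ (hy0 n)).1] at hn
      have hyn := hy0 n
      have hlt2 : w n < a / c * y n := by
        by_contra hcon
        exact absurd hn (not_lt.2 (hVle _ _ (by positivity) (not_lt.1 hcon)))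
      have e : w n * (c * (1 / y n)) = w n * c / y n := by ring
      rw [e, div_lt_iff₀ hyn]
      rwa [div_mul_eq_mul_div, lt_div_iff₀ hc0] at hlt2
  refine main.congr' ?_
  filter_upwards [hev] with n h
  rw [h.2]
end
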